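/- arXiv:math/0408031 — 3 statements merged into one kernel-verified Lean document; each statement's English description precedes it below -/
import Mathlib

section
/- The expected length of the shortest cycle of a random n-cyclation satisfies Ex[T_n] ∼ (π^{1/2}/2)·(∫_0^∞ e^{E(x)/2 − x} dx)·n^{1/2} as n → ∞, i.e. Ex[T_n]/n^{1/2} tends to (π^{1/2}/2)·∫_0^∞ e^{E(x)/2 − x} dx, where E(x) = ∫_x^∞ (e^{−y}/y) dy. -/
/-- The fixed involution pairing the two endpoints of each interval:
endpoint `2m` is paired with endpoint `2m+1`. -/
def intervalPerm (n : ℕ) : Equiv.Perm (Fin (2 * n)) :=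
  Function.Involutive.toPerm
    (fun x => ⟨if x.1 % 2 = 0 then x.1 + 1 else x.1 - 1, by
      have := x.2; split <;> omega⟩)
    (fun x => by
      have := x.2
      ext
      simp only
      split_ifs <;> omega)

/-- An `n`-cyclation: a fixed-point-free involution (perfect matching) on the `2*n`
endpoints of the `n` intervals. -/
def Cyclation (n : ℕ) : Type :=
  {μ : Equiv.Perm (Fin (2 * n)) // (∀ x, μ x ≠ x) ∧ μ * μ = 1}

instance (n : ℕ) : Finite (Cyclation n) := Subtype.finite

noncomputable instance (n : ℕ) : Fintype (Cyclation n) := Fintype.ofFinite _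

/-- The subgroup generated by the matching and the interval pairing; its orbits on the
endpoints are exactly the connected components (cycles) of the cyclation, viewed as the
multigraph whose edges are the intervals together with the matched pairs. -/
def cycGroup {n : ℕ} (c : Cyclation n) : Subgroup (Equiv.Perm (Fin (2 * n))) :=
  Subgroup.closure {c.1, intervalPerm n}

/-- Number of cycles of a cyclation: the number of connected components, i.e. the number
of orbits of `cycGroup c` on the endpoints. -/
noncomputable def cycNumCycles {n : ℕ} (c : Cyclation n) : ℕ :=
  Nat.card (MulAction.orbitRel.Quotient (cycGroup c) (Fin (2 * n)))

/-- Number of cycles of length `l` of a cyclation (a cycle containing `l` intervals is a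
connected component with `2*l` endpoints). -/
noncomputable def cycNumCyclesOfLength {n : ℕ} (c : Cyclation n) (l : ℕ) : ℕ :=
  Nat.card {q : MulAction.orbitRel.Quotient (cycGroup c) (Fin (2 * n)) // q.orbit.ncard = 2 * l}

/-- Length (number of intervals) of the longest cycle of a cyclation. -/
noncomputable def longestCycle {n : ℕ} (c : Cyclation n) : ℕ :=
  (Finset.univ.sup fun x : Fin (2 * n) => (MulAction.orbit (cycGroup c) x).ncard) / 2

/-- Length (number of intervals) of the shortest cycle of a cyclation. -/
noncomputable def shortestCycle {n : ℕ} (c : Cyclation n) : ℕ :=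
  sInf (Set.range fun x : Fin (2 * n) => (MulAction.orbit (cycGroup c) x).ncard / 2)

/-- `Ex[M_n]`: the expected length of the longest cycle of a uniformly random
`n`-cyclation, i.e. the average of the longest cycle length over all `n`-cyclations. -/
noncomputable def ExM (n : ℕ) : ℝ :=
  (∑ c : Cyclation n, (longestCycle c : ℝ)) / Fintype.card (Cyclation n)

/-- `Ex[T_n]`: the expected length of the shortest cycle of a uniformly random
`n`-cyclation, i.e. the average of the shortest cycle length over all `n`-cyclations. -/
noncomputable def ExT (n : ℕ) : ℝ :=
  (∑ c : Cyclation n, (shortestCycle c : ℝ)) / Fintype.card (Cyclation n)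

/-- The exponential integral `E(x) = ∫_x^∞ e^{-y}/y dy`. -/
noncomputable def Efun (x : ℝ) : ℝ := ∫ y in Set.Ioi x, Real.exp (-y) / y


namespace Cyc

set_option linter.unusedSectionVars false

structure FI {α : Type} (μ : α → α) : Prop where
  inv : ∀ a, μ (μ a) = a
  ne : ∀ a, μ a ≠ a

def Good {α : Type} (K : ℕ) (ι μ : α → α) (w : α → ℕ) : Prop :=
  ∀ S : Finset α, S.Nonempty → (∀ a ∈ S, ι a ∈ S) → (∀ a ∈ S, μ a ∈ S) → K ≤ ∑ a ∈ S, w a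

def f (K : ℕ) : ℕ → ℕ → ℕ
  | 0, _ => 1
  | n + 1, W => (if K ≤ W then f K n 2 else 0) + 2 * n * f K n (W + 2)

section
variable {α : Type} [Fintype α] [DecidableEq α]

abbrev Rem (x y : α) : Type := {a : α // a ≠ x ∧ a ≠ y}

lemma sum_rem (x y : α) (hxy : y ≠ x) (F : α → ℕ) :
    ∑ a, F a = F x + F y + ∑ b : Rem x y, F b := by
  rw [← Finset.add_sum_erase _ _ (Finset.mem_univ x),
    ← Finset.add_sum_erase (Finset.univ.erase x) _ (show y ∈ _ by simp [hxy]), ← add_assoc]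
  congr 1
  rw [← Finset.sum_subtype]
  intro a; simp; tauto

lemma card_rem (x y : α) (hxy : y ≠ x) : Fintype.card α = Fintype.card (Rem x y) + 2 := by
  have := sum_rem x y hxy (fun _ => 1)
  simp only [Finset.sum_const, Finset.card_univ, smul_eq_mul, mul_one] at this
  omega

def ext (x y : α) (m : Rem x y → Rem x y) : α → α := fun a =>
  if h : a ≠ x ∧ a ≠ y then (m ⟨a, h⟩ : α) else if a = x then y else x

lemma ext_x {x y : α} (m : Rem x y → Rem x y) : ext x y m x = y := by simp [ext]
lemma ext_y {x y : α} (hxy : y ≠ x) (m : Rem x y → Rem x y) : ext x y m y = x := by simp [ext, hxy]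
lemma ext_rem {x y : α} (m : Rem x y → Rem x y) (b : Rem x y) : ext x y m b = m b := by
  simp [ext, b.2]

lemma ext_FI {x y : α} (hxy : y ≠ x) {m : Rem x y → Rem x y} (hm : FI m) : FI (ext x y m) := by
  constructor
  · intro a
    by_cases h : a ≠ x ∧ a ≠ y
    · have := ext_rem m ⟨a, h⟩
      simp only at this
      rw [this, ext_rem, hm.inv]
    · by_cases hx : a = x
      · rw [hx, ext_x, ext_y hxy]
      · have : a = y := by tauto
        rw [this, ext_y hxy, ext_x]
  · intro a
    by_cases h : a ≠ x ∧ a ≠ y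
    · have := ext_rem m ⟨a, h⟩
      simp only at this
      rw [this]
      intro h2
      exact hm.ne ⟨a, h⟩ (Subtype.ext h2)
    · by_cases hx : a = x
      · rw [hx, ext_x]; exact hxy
      · have : a = y := by tauto
        rw [this, ext_y hxy]; exact hxy.symm

lemma fiber (x y : α) (hxy : y ≠ x) (P : (α → α) → Prop) :
    Nat.card {μ : α → α // (FI μ ∧ P μ) ∧ μ x = y} =
      Nat.card {m : Rem x y → Rem x y // FI m ∧ P (ext x y m)} := by
  symm
  refine Nat.card_congr (Equiv.ofBijective
    (fun m => ⟨ext x y m.1, ⟨ext_FI hxy m.2.1, m.2.2⟩, ext_x _⟩) ⟨?_, ?_⟩)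
  · intro m m' h
    have h1 : ext x y m.1 = ext x y m'.1 := congrArg Subtype.val h
    apply Subtype.ext
    funext b
    apply Subtype.ext
    rw [← ext_rem, ← ext_rem, h1]
  · rintro ⟨μ, ⟨h1, h2⟩, h3⟩
    have h4 : μ y = x := by rw [← h3, h1.inv]
    have key : ∀ b : Rem x y, μ b ≠ x ∧ μ b ≠ y := by
      intro b
      refine ⟨fun h => b.2.2 ?_, fun h => b.2.1 ?_⟩
      · rw [← h1.inv b, h, h3]
      · rw [← h1.inv b, h, h4]
    have he : ext x y (fun b => ⟨μ b, key b⟩) = μ := by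
      funext a
      by_cases h : a ≠ x ∧ a ≠ y
      · exact ext_rem _ ⟨a, h⟩
      · by_cases hx : a = x
        · rw [hx, ext_x, h3]
        · have : a = y := by tauto
          rw [this, ext_y hxy, h4]
    refine ⟨⟨fun b => ⟨μ b, key b⟩, ⟨?_, ?_⟩, ?_⟩, ?_⟩
    · intro b; apply Subtype.ext; exact h1.inv b
    · intro b h; exact h1.ne b (congrArg Subtype.val h)
    · rw [he]; exact h2
    · apply Subtype.ext; exact he

/-- spliced interval involution -/
def iotaR (x y : α) (ι : α → α) (hι : FI ι) : Rem x y → Rem x y := fun a =>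
  ⟨if ι a = x then ι y else if ι a = y then ι x else ι a, by
    have ha := a.2
    have h1 := hι.inv a
    have h2 := hι.inv x
    have h3 := hι.inv y
    have h4 := hι.ne x
    have h5 := hι.ne y
    split_ifs with h h'
    · rw [h] at h1
      refine ⟨?_, h5⟩
      intro h6; rw [h6] at h3; rw [h3] at h1; exact ha.2 h1.symm
    · rw [h'] at h1
      refine ⟨h4, ?_⟩
      intro h6; rw [h6] at h2; rw [h2] at h1; exact ha.1 h1.symm
    · exact ⟨h, h'⟩⟩

lemma iotaR_FI {x y : α} (hxy : y ≠ x) {ι : α → α} (hι : FI ι) : FI (iotaR x y ι hι) := by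
  have h2 := hι.inv x
  have h3 := hι.inv y
  have h4 := hι.ne x
  have h5 := hι.ne y
  constructor
  · rintro ⟨a, ha⟩
    have h1 := hι.inv a
    apply Subtype.ext
    simp only [iotaR]
    grind
  · rintro ⟨a, ha⟩ h
    have h1 := hι.inv a
    have h6 := hι.ne a
    have := congrArg Subtype.val h
    simp only [iotaR] at this
    grind

def wR (x y : α) (ι : α → α) (w : α → ℕ) : Rem x y → ℕ := fun a =>
  w a + (if (a : α) = ι x then w x else 0) + (if (a : α) = ι y then w y else 0)

lemma sum_fin (S : Finset α) (w : α → ℕ) : ∑ a ∈ S, w a = ∑ a, if a ∈ S then w a else 0 := by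
  simp

lemma good_splice {x y : α} (hxy : y ≠ x) {ι : α → α} (hι : FI ι) (hy : y ≠ ι x)
    (w : α → ℕ) (K : ℕ) (m : Rem x y → Rem x y) :
    Good K ι (ext x y m) w ↔ Good K (iotaR x y ι hι) m (wR x y ι w) := by
  have hxx := hι.inv x
  have hyy := hι.inv y
  have hnx := hι.ne x
  have hny := hι.ne y
  have hx' : x ≠ ι y := by intro h; apply hy; rw [h, hyy]
  let ix : Rem x y := ⟨ι x, hnx, hy.symm⟩
  let iy : Rem x y := ⟨ι y, hx'.symm, hny⟩
  have eix : iotaR x y ι hι ix = iy := by apply Subtype.ext; simp [iotaR, ix, iy, hxx]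
  have eiy : iotaR x y ι hι iy = ix := by apply Subtype.ext; simp [iotaR, ix, iy, hyy, hxy]
  -- the general sum identity
  have sums : ∀ (S : Finset α) (S' : Finset (Rem x y)),
      (∀ b : Rem x y, (b : α) ∈ S ↔ b ∈ S') → (x ∈ S ↔ ix ∈ S') → (y ∈ S ↔ iy ∈ S') →
      ∑ a ∈ S, w a = ∑ b ∈ S', wR x y ι w b := by
    intro S S' h1 h2 h3
    rw [sum_fin, sum_fin S', sum_rem x y hxy]
    have e1 : ∀ b : Rem x y, (if b ∈ S' then wR x y ι w b else 0) =
        (if b = ix then (if ix ∈ S' then w x else 0) else 0) +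
        (if b = iy then (if iy ∈ S' then w y else 0) else 0) +
        (if (b : α) ∈ S then w b else 0) := by
      intro b
      have c1 : b = ix ↔ (b : α) = ι x := Subtype.ext_iff
      have c2 : b = iy ↔ (b : α) = ι y := Subtype.ext_iff
      have c3 : b = ix → (b ∈ S' ↔ ix ∈ S') := by rintro rfl; rfl
      have c4 : b = iy → (b ∈ S' ↔ iy ∈ S') := by rintro rfl; rfl
      simp only [wR, h1 b, ← c1, ← c2]
      clear_value ix iy
      by_cases d1 : b = ix <;> by_cases d2 : b = iy <;> by_cases d3 : b ∈ S' <;>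
        simp_all <;> omega
    rw [Finset.sum_congr rfl (fun b _ => e1 b), Finset.sum_add_distrib, Finset.sum_add_distrib]
    simp [h2, h3]
  constructor
  · intro H S' hne hi hm
    let S : Finset α := Finset.univ.filter
      (fun a => if h : a ≠ x ∧ a ≠ y then (⟨a, h⟩ : Rem x y) ∈ S' else ix ∈ S')
    have hS1 : ∀ b : Rem x y, (b : α) ∈ S ↔ b ∈ S' := by intro b; simp [S, b.2]
    have hSx : x ∈ S ↔ ix ∈ S' := by simp [S]
    have hSy' : y ∈ S ↔ ix ∈ S' := by simp [S]
    have hxy' : ix ∈ S' ↔ iy ∈ S' :=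
      ⟨fun h => by rw [← eix]; exact hi _ h, fun h => by rw [← eiy]; exact hi _ h⟩
    have hSy : y ∈ S ↔ iy ∈ S' := by rw [hSy', hxy']
    rw [← sums S S' hS1 hSx hSy]
    apply H
    · obtain ⟨b, hb⟩ := hne
      exact ⟨b, (hS1 b).2 hb⟩
    · intro a ha
      by_cases h : a ≠ x ∧ a ≠ y
      · have hb := hi _ ((hS1 ⟨a, h⟩).1 ha)
        rw [← hS1] at hb
        simp only [iotaR] at hb
        split_ifs at hb with c1 c2
        · rw [c1, hSx]
          have : a = ι x := by rw [← c1, hι.inv]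
          have : (⟨a, h⟩ : Rem x y) = ix := Subtype.ext this
          rw [← this, ← hS1]; exact ha
        · rw [c2, hSy]
          have : a = ι y := by rw [← c2, hι.inv]
          have : (⟨a, h⟩ : Rem x y) = iy := Subtype.ext this
          rw [← this, ← hS1]; exact ha
        · exact hb
      · by_cases hx : a = x
        · subst hx; exact (hS1 ix).2 (hSx.1 ha)
        · have : a = y := by tauto
          subst this; exact (hS1 iy).2 (hSy.1 ha)
    · intro a ha
      by_cases h : a ≠ x ∧ a ≠ y
      · have hb := hm _ ((hS1 ⟨a, h⟩).1 ha)
        rw [← hS1, ← ext_rem] at hb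
        exact hb
      · by_cases hx : a = x
        · subst hx; rw [ext_x, hSy']; exact hSx.1 ha
        · have : a = y := by tauto
          subst this; rw [ext_y hxy, hSx]; exact hSy'.1 ha
  · intro H S hne hi hm
    let S' : Finset (Rem x y) := Finset.univ.filter (fun b => (b : α) ∈ S)
    have hS1 : ∀ b : Rem x y, (b : α) ∈ S ↔ b ∈ S' := by intro b; simp [S']
    have hSx : x ∈ S ↔ ix ∈ S' := by
      rw [← hS1]
      exact ⟨fun h => hi _ h, fun h => by have := hi _ h; simp only [ix] at this; rwa [hxx] at this⟩
    have hSy : y ∈ S ↔ iy ∈ S' := by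
      rw [← hS1]
      exact ⟨fun h => hi _ h, fun h => by have := hi _ h; simp only [iy] at this; rwa [hyy] at this⟩
    have hxyS : x ∈ S ↔ y ∈ S :=
      ⟨fun h => by have := hm _ h; rwa [ext_x] at this,
       fun h => by have := hm _ h; rwa [ext_y hxy] at this⟩
    rw [sums S S' hS1 hSx hSy]
    apply H
    · obtain ⟨a, ha⟩ := hne
      by_cases h : a ≠ x ∧ a ≠ y
      · exact ⟨⟨a, h⟩, (hS1 _).1 ha⟩
      · by_cases hx : a = x
        · subst hx; exact ⟨ix, hSx.1 ha⟩
        · have : a = y := by tauto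
          subst this; exact ⟨iy, hSy.1 ha⟩
    · intro b hb
      rw [← hS1] at hb ⊢
      have h0 := hi _ hb
      simp only [iotaR]
      split_ifs with c1 c2
      · rw [c1] at h0; exact hi _ (hxyS.1 h0)
      · rw [c2] at h0; exact hi _ (hxyS.2 h0)
      · exact h0
    · intro b hb
      rw [← hS1] at hb ⊢
      rw [← ext_rem]
      exact hm _ hb

lemma good_close {x y : α} (hxy : y ≠ x) {ι : α → α} (hι : FI ι) (hy : y = ι x)
    (w : α → ℕ) (K : ℕ) (m : Rem x y → Rem x y) :
    Good K ι (ext x y m) w ↔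
      (K ≤ w x + w y ∧ Good K (iotaR x y ι hι) m (wR x y ι w)) := by
  have hxx := hι.inv x
  have hyx : ι y = x := by rw [hy, hxx]
  have io : ∀ b : Rem x y, (iotaR x y ι hι b : α) = ι b := by
    intro b
    have h1 := hι.inv b
    have h2 := b.2
    simp only [iotaR]
    grind
  have ww : ∀ b : Rem x y, wR x y ι w b = w b := by
    intro b
    have h2 := b.2
    simp only [wR]
    grind
  constructor
  · intro H
    constructor
    · have := H {x, y} (by simp) (by simp [hyx, ← hy]) (by simp [ext_x, ext_y hxy])
      rwa [Finset.sum_pair hxy.symm] at this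
    · intro S' hne hi hm
      have := H (S'.map (Function.Embedding.subtype _)) (by simpa using hne) ?_ ?_
      · rw [Finset.sum_map] at this
        simpa [ww] using this
      · intro a ha
        rw [Finset.mem_map] at ha ⊢
        obtain ⟨b, hb, rfl⟩ := ha
        exact ⟨_, hi b hb, io b⟩
      · intro a ha
        rw [Finset.mem_map] at ha ⊢
        obtain ⟨b, hb, rfl⟩ := ha
        exact ⟨_, hm b hb, (ext_rem m b).symm⟩
  · rintro ⟨h1, H⟩ S hne hi hm
    by_cases hx : x ∈ S
    · have hyS : y ∈ S := by have := hm _ hx; rwa [ext_x] at this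
      calc K ≤ w x + w y := h1
        _ = ∑ a ∈ {x, y}, w a := (Finset.sum_pair hxy.symm).symm
        _ ≤ _ := Finset.sum_le_sum_of_subset (by
          intro a ha; simp at ha; rcases ha with rfl | rfl <;> assumption)
    · have hyS : y ∉ S := by
        intro h; have := hm _ h; rw [ext_y hxy] at this; exact hx this
      let S' : Finset (Rem x y) := Finset.univ.filter (fun b => (b : α) ∈ S)
      have hS1 : ∀ b : Rem x y, (b : α) ∈ S ↔ b ∈ S' := by intro b; simp [S']
      have hsum : ∑ a ∈ S, w a = ∑ b ∈ S', wR x y ι w b := by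
        rw [sum_fin, sum_fin S', sum_rem x y hxy]
        simp [hx, hyS, hS1, ww]
      rw [hsum]
      apply H
      · obtain ⟨a, ha⟩ := hne
        exact ⟨⟨a, by rintro rfl; exact hx ha, by rintro rfl; exact hyS ha⟩, (hS1 _).1 ha⟩
      · intro b hb
        rw [← hS1] at hb ⊢
        rw [io]; exact hi _ hb
      · intro b hb
        rw [← hS1] at hb ⊢
        rw [← ext_rem]; exact hm _ hb

end

theorem count (K : ℕ) : ∀ (n : ℕ) (α : Type) [Fintype α] [DecidableEq α] (ι : α → α) (_ : FI ι)
    (w : α → ℕ) (W : ℕ), Fintype.card α = 2 * n →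
    (n = 0 ∨ ∃ x, w x + w (ι x) = W ∧ ∀ a, a ≠ x → a ≠ ι x → w a + w (ι a) = 2) →
    Nat.card {μ : α → α // FI μ ∧ Good K ι μ w} = f K n W := by
  intro n
  induction n with
  | zero =>
    intro α _ _ ι hι w W hc _
    have : IsEmpty α := Fintype.card_eq_zero_iff.1 (by simpa using hc)
    rw [f, Nat.card_eq_one_iff_unique]
    refine ⟨⟨fun a b => Subtype.ext (Subsingleton.elim _ _)⟩, ⟨⟨id, ⟨isEmptyElim, isEmptyElim⟩, ?_⟩⟩⟩
    intro S hS
    obtain ⟨a, _⟩ := hS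
    exact isEmptyElim a
  | succ n ih =>
    intro α _ _ ι hι w W hc hx
    obtain ⟨x, hxW, hother⟩ : ∃ x, w x + w (ι x) = W ∧ ∀ a, a ≠ x → a ≠ ι x → w a + w (ι a) = 2 := by
      rcases hx with h | h
      · omega
      · exact h
    have step1 : Nat.card {μ : α → α // FI μ ∧ Good K ι μ w} =
        ∑ y, Nat.card {μ : α → α // (FI μ ∧ Good K ι μ w) ∧ μ x = y} := by
      classical
      rw [Nat.card_congr (Equiv.sigmaFiberEquiv
        (fun μ : {μ : α → α // FI μ ∧ Good K ι μ w} => μ.1 x)).symm, Nat.card_sigma]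
      refine Finset.sum_congr rfl fun y _ => Nat.card_congr ?_
      exact Equiv.subtypeSubtypeEquivSubtypeInter (fun μ : α → α => FI μ ∧ Good K ι μ w)
        (fun μ => μ x = y)
    have hnx := hι.ne x
    have hxx := hι.inv x
    have t1 : Nat.card {μ : α → α // (FI μ ∧ Good K ι μ w) ∧ μ x = x} = 0 := by
      have : IsEmpty {μ : α → α // (FI μ ∧ Good K ι μ w) ∧ μ x = x} :=
        ⟨fun μ => μ.2.1.1.ne x μ.2.2⟩
      simp
    have t2 : Nat.card {μ : α → α // (FI μ ∧ Good K ι μ w) ∧ μ x = ι x} =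
        if K ≤ W then f K n 2 else 0 := by
      rw [fiber x (ι x) hnx]
      simp only [good_close hnx hι rfl, hxW]
      split_ifs with hK
      · simp only [hK, true_and]
        apply ih _ _ (iotaR_FI hnx hι)
        · have := card_rem x (ι x) hnx; omega
        · rcases Nat.eq_zero_or_pos n with h | h
          · exact Or.inl h
          · right
            have hcard := card_rem x (ι x) hnx
            have : 0 < Fintype.card (Rem x (ι x)) := by omega
            obtain ⟨b⟩ := Fintype.card_pos_iff.1 this
            have key : ∀ b : Rem x (ι x), wR x (ι x) ι w b +
                wR x (ι x) ι w (iotaR x (ι x) ι hι b) = 2 := by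
              intro b
              have h1 := hι.inv b
              have h2 := b.2
              have h3 := hother b h2.1 h2.2
              simp only [wR, iotaR]
              grind
            exact ⟨b, key b, fun a _ _ => key a⟩
      · simp [hK]
    have t3 : ∀ y, y ≠ x → y ≠ ι x →
        Nat.card {μ : α → α // (FI μ ∧ Good K ι μ w) ∧ μ x = y} = f K n (W + 2) := by
      intro y hyx hyi
      rw [fiber x y hyx]
      simp only [good_splice hyx hι hyi]
      apply ih _ _ (iotaR_FI hyx hι)
      · have := card_rem x y hyx; omega
      · right
        have h3 := hι.inv y
        have h4 := hι.ne y
        have h5 := hother y hyx hyi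
        refine ⟨⟨ι x, hnx, hyi.symm⟩, ?_, ?_⟩
        · simp only [wR, iotaR]
          grind
        · rintro ⟨a, ha⟩ h6 h7
          have h8 := hι.inv a
          have h9 : a ≠ ι x := fun h => h6 (Subtype.ext h)
          have h10 : a ≠ ι y := fun h => h7 (Subtype.ext (by simp [iotaR, hxx, h]))
          have h11 := hother a ha.1 h9
          simp only [wR, iotaR]
          grind
    rw [step1, sum_rem x (ι x) hnx, t1, t2, Finset.sum_congr rfl (fun b _ => t3 b.1 b.2.1 b.2.2)]
    have := card_rem x (ι x) hnx
    have h2n : Fintype.card (Rem x (ι x)) = 2 * n := by omega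
    rw [Finset.sum_const, Finset.card_univ, h2n, f]
    simp

end Cyc
namespace Cyc

noncomputable def cycEquiv (n : ℕ) : Cyclation n ≃ {μ : Fin (2 * n) → Fin (2 * n) // FI μ} where
  toFun c := ⟨c.1, fun a => by
    have := congrArg (fun g : Equiv.Perm _ => g a) c.2.2
    simpa using this, c.2.1⟩
  invFun μ := ⟨Function.Involutive.toPerm μ.1 μ.2.inv, μ.2.ne, by
    apply Equiv.ext; intro a; exact μ.2.inv a⟩
  left_inv c := by apply Subtype.ext; ext a; rfl
  right_inv μ := rfl

lemma interval_FI (n : ℕ) : FI (intervalPerm n) := by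
  constructor
  · intro a
    exact (Function.Involutive.toPerm_involutive _) a
  · intro a h
    have := congrArg Fin.val h
    change (if a.1 % 2 = 0 then a.1 + 1 else a.1 - 1) = a.1 at this
    split_ifs at this <;> omega

lemma mem_orbit_inv {n : ℕ} (c : Cyclation n) (S : Finset (Fin (2 * n)))
    (h1 : ∀ a ∈ S, intervalPerm n a ∈ S) (h2 : ∀ a ∈ S, c.1 a ∈ S) {a : Fin (2 * n)} (ha : a ∈ S) :
    MulAction.orbit (cycGroup c) a ⊆ (S : Set _) := by
  have key : ∀ g ∈ cycGroup c, ∀ b, g b ∈ S ↔ b ∈ S := by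
    intro g hg
    refine Subgroup.closure_induction (p := fun g _ => ∀ b, g b ∈ S ↔ b ∈ S) ?_ ?_ ?_ ?_ hg
    · rintro g (rfl | rfl) b
      · refine ⟨fun h => ?_, fun h => h2 _ h⟩
        have := h2 _ h
        rwa [show c.1 (c.1 b) = b from ((cycEquiv n) c).2.inv b] at this
      · refine ⟨fun h => ?_, fun h => h1 _ h⟩
        have := h1 _ h
        rwa [(interval_FI n).inv b] at this
    · intro b; simp
    · intro x y _ _ hx hy b
      simp [hx, hy]
    · intro x _ hx b
      rw [← hx]; simp
  rintro _ ⟨g, rfl⟩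
  exact (key g.1 g.2 a).2 ha

lemma shortest_iff {n : ℕ} (hn : 0 < n) (c : Cyclation n) (k : ℕ) :
    k < shortestCycle c ↔ Good (2 * k + 2) (intervalPerm n) c.1 (fun _ => 1) := by
  classical
  constructor
  · rintro h S ⟨a, ha⟩ h1 h2
    have h3 := mem_orbit_inv c S h1 h2 ha
    have h4 := Set.ncard_le_ncard h3
    have h5 : shortestCycle c ≤ (MulAction.orbit (cycGroup c) a).ncard / 2 := Nat.sInf_le ⟨a, rfl⟩
    rw [Set.ncard_coe_finset] at h4
    simp
    omega
  · intro h
    have hne : (Set.range fun x : Fin (2 * n) =>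
        (MulAction.orbit (cycGroup c) x).ncard / 2).Nonempty := ⟨_, ⟨0, by omega⟩, rfl⟩
    obtain ⟨x, hx⟩ := Nat.sInf_mem hne
    have h1 := h (MulAction.orbit (cycGroup c) x).toFinset
      ⟨x, by simp⟩ ?_ ?_
    · simp only [Finset.sum_const, smul_eq_mul, mul_one, ← Set.ncard_eq_toFinset_card'] at h1
      change _ = shortestCycle c at hx
      simp only at hx
      omega
    · intro a ha
      rw [Set.mem_toFinset] at ha ⊢
      have : intervalPerm n ∈ cycGroup c := Subgroup.subset_closure (by simp)
      exact MulAction.mem_orbit_of_mem_orbit (⟨_, this⟩ : cycGroup c) ha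
    · intro a ha
      rw [Set.mem_toFinset] at ha ⊢
      have : c.1 ∈ cycGroup c := Subgroup.subset_closure (by simp)
      exact MulAction.mem_orbit_of_mem_orbit (⟨_, this⟩ : cycGroup c) ha

lemma count_std (K n : ℕ) : Nat.card {μ : Fin (2 * n) → Fin (2 * n) //
    FI μ ∧ Good K (intervalPerm n) μ (fun _ => 1)} = f K n 2 := by
  apply count K n _ _ (interval_FI n)
  · simp
  · rcases Nat.eq_zero_or_pos n with h | h
    · exact Or.inl h
    · exact Or.inr ⟨⟨0, by omega⟩, rfl, fun _ _ _ => rfl⟩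

lemma card_shortest {n : ℕ} (hn : 0 < n) (k : ℕ) :
    Nat.card {c : Cyclation n // k < shortestCycle c} = f (2 * k + 2) n 2 := by
  rw [← count_std]
  refine Nat.card_congr (((cycEquiv n).subtypeEquiv
    (q := fun μ => Good (2 * k + 2) (intervalPerm n) μ.1 (fun _ => 1)) ?_).trans
    (Equiv.subtypeSubtypeEquivSubtypeInter _ 
      (fun μ => Good (2 * k + 2) (intervalPerm n) μ (fun _ => 1))))
  intro c
  exact shortest_iff hn c k

lemma card_cyc (n : ℕ) : Fintype.card (Cyclation n) = f 0 n 2 := by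
  rw [← count_std, ← Nat.card_eq_fintype_card]
  refine Nat.card_congr ((cycEquiv n).trans (Equiv.subtypeEquivRight ?_))
  intro μ
  simp [Good]

lemma shortest_le {n : ℕ} (hn : 0 < n) (c : Cyclation n) : shortestCycle c ≤ n := by
  have h5 : shortestCycle c ≤ (MulAction.orbit (cycGroup c) (⟨0, by omega⟩ : Fin (2 * n))).ncard / 2 :=
    Nat.sInf_le ⟨_, rfl⟩
  have := Set.ncard_le_card (MulAction.orbit (cycGroup c) (⟨0, by omega⟩ : Fin (2 * n)))
  simp at this
  omega

lemma sum_shortest {n : ℕ} (hn : 0 < n) :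
    ∑ c : Cyclation n, (shortestCycle c : ℝ) = ∑ k ∈ Finset.range n, (f (2 * k + 2) n 2 : ℝ) := by
  classical
  have h1 : ∀ c : Cyclation n, shortestCycle c =
      ∑ k ∈ Finset.range n, if k < shortestCycle c then 1 else 0 := by
    intro c
    have := shortest_le hn c
    rw [← Finset.sum_filter]
    have : (Finset.range n).filter (fun k => k < shortestCycle c) = Finset.range (shortestCycle c) := by
      ext k; simp; omega
    rw [this]; simp
  rw [← Nat.cast_sum, ← Nat.cast_sum, Finset.sum_congr rfl (fun c _ => h1 c), Finset.sum_comm]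
  congr 1
  refine Finset.sum_congr rfl fun k _ => ?_
  rw [← card_shortest hn, Nat.card_eq_fintype_card, Fintype.card_subtype, Finset.card_filter]

noncomputable def q (k n : ℕ) : ℝ := (f (2 * k + 2) n 2 : ℝ) / (2 ^ n * n.factorial)

lemma q_zero (k : ℕ) : q k 0 = 1 := by simp [q, f]

lemma q_nonneg (k n : ℕ) : 0 ≤ q k n := by unfold q; positivity

lemma f_eq (k n : ℕ) : ∀ w, (f (2 * k + 2) (n + 1) (2 * w) : ℝ) =
    2 ^ n * n.factorial * ∑ j ∈ Finset.range (n + 1 - (k + 1 - w)), q k j := by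
  induction n with
  | zero =>
    intro w
    by_cases h : k + 1 ≤ w
    · have h2 : 2 * k + 2 ≤ 2 * w := by omega
      have h3 : 0 + 1 - (k + 1 - w) = 1 := by omega
      rw [h3]
      simp [f, h2, q_zero]
    · have h2 : ¬ (2 * k + 2 ≤ 2 * w) := by omega
      have h3 : 0 + 1 - (k + 1 - w) = 0 := by omega
      rw [h3]
      simp [f, h2]
  | succ n ih =>
    intro w
    rw [f]
    push_cast
    have h0 := ih (w + 1)
    rw [show 2 * (w + 1) = 2 * w + 2 by ring] at h0
    rw [h0]
    by_cases h : k + 1 ≤ w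
    · have h2 : 2 * k + 2 ≤ 2 * w := by omega
      have h3 : n + 1 + 1 - (k + 1 - w) = n + 1 + 1 := by omega
      have h4 : n + 1 - (k + 1 - (w + 1)) = n + 1 := by omega
      have h5 : (f (2 * k + 2) (n + 1) 2 : ℝ) = 2 ^ (n + 1) * (n + 1).factorial * q k (n + 1) := by
        unfold q; field_simp
      rw [h3, h4, Finset.sum_range_succ _ (n + 1), if_pos h2, h5, Nat.factorial_succ]
      push_cast
      ring
    · have h2 : ¬ (2 * k + 2 ≤ 2 * w) := by omega
      have h3 : n + 1 + 1 - (k + 1 - w) = n + 1 - (k + 1 - (w + 1)) := by omega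
      rw [h3, if_neg h2, Nat.factorial_succ]
      push_cast
      ring

lemma q_rec (k n : ℕ) : 2 * ((n : ℝ) + 1) * q k (n + 1) = ∑ j ∈ Finset.range (n + 1 - k), q k j := by
  have h := f_eq k n 1
  have h1 : k + 1 - 1 = k := by omega
  rw [h1, mul_one] at h
  rw [q, h, Nat.factorial_succ]
  push_cast
  field_simp
  ring

lemma f_zero (n : ℕ) : ∀ W, (f 0 n W : ℝ) * 4 ^ n = 2 ^ n * n.factorial * n.centralBinom := by
  induction n with
  | zero => intro W; simp [f]
  | succ n ih =>
    intro W
    have h1 := Nat.succ_mul_centralBinom_succ n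
    have h2 : ((n : ℝ) + 1) * (n + 1).centralBinom = 2 * (2 * n + 1) * n.centralBinom := by
      exact_mod_cast h1
    rw [f, Nat.factorial_succ]
    simp only [Nat.zero_le, if_true]
    push_cast
    have e1 := ih 2
    have e2 := ih (W + 2)
    calc ((f 0 n 2 : ℝ) + 2 * n * f 0 n (W + 2)) * 4 ^ (n + 1)
        = 4 * (f 0 n 2 * 4 ^ n) + 8 * n * (f 0 n (W + 2) * 4 ^ n) := by ring
      _ = 2 ^ (n + 1) * n.factorial * (2 * (2 * n + 1) * n.centralBinom) := by
        rw [e1, e2]; ring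
      _ = _ := by rw [← h2]; ring

noncomputable def u (n : ℕ) : ℝ := (n.centralBinom : ℝ) / 4 ^ n

lemma ExT_eq {n : ℕ} (hn : 0 < n) : ExT n = (∑ k ∈ Finset.range n, q k n) / u n := by
  have h := f_zero n 2
  have h0 : (f 0 n 2 : ℝ) = 2 ^ n * n.factorial * u n := by
    unfold u; field_simp; linarith
  rw [ExT, sum_shortest hn, card_cyc, h0]
  simp only [q]
  rw [← Finset.sum_div, div_div]

lemma u_pos (n : ℕ) : 0 < u n := by
  have := Nat.centralBinom_pos n
  unfold u; positivity

open Filter Topology in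
lemma u_lim : Tendsto (fun n : ℕ => 1 / (u n * √n)) atTop (𝓝 √Real.pi) := by
  have h1 := Real.Wallis.tendsto_W_nhds_pi_div_two
  have h2 : Tendsto (fun n : ℕ => (2 : ℝ) + 1 / n) atTop (𝓝 (2 + 0)) :=
    tendsto_const_nhds.add tendsto_one_div_atTop_nhds_zero_nat
  have h3 := (h1.mul h2).sqrt
  rw [show Real.pi / 2 * (2 + 0) = Real.pi by ring] at h3
  refine h3.congr' ?_
  filter_upwards [eventually_gt_atTop 0] with n hn
  have hn' : (0 : ℝ) < n := by exact_mod_cast hn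
  have hu := u_pos n
  rw [Real.Wallis.W_eq_factorial_ratio]
  have hcb : (n.centralBinom : ℝ) * n.factorial * n.factorial = (2 * n).factorial := by
    have := Nat.choose_mul_factorial_mul_factorial (show n ≤ 2 * n by omega)
    rw [show 2 * n - n = n by omega] at this
    rw [Nat.centralBinom]; exact_mod_cast this
  have hf : (n.factorial : ℝ) ≠ 0 := by positivity
  have e : (2 : ℝ) ^ (4 * n) * n.factorial ^ 4 / ((2 * n).factorial ^ 2 * (2 * n + 1)) * (2 + 1 / n)
      = (1 / (u n * √n)) ^ 2 := by
    have hcb0 : (n.centralBinom : ℝ) ≠ 0 := by exact_mod_cast (Nat.centralBinom_pos n).ne'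
    rw [← hcb, div_pow, mul_pow (u n), Real.sq_sqrt hn'.le, u]
    rw [show (2 : ℝ) ^ (4 * n) = 4 ^ n * 4 ^ n by
      rw [← mul_pow, pow_mul]; norm_num]
    field_simp
  rw [e, Real.sqrt_sq (by positivity)]

end Cyc
namespace Cyc

lemma q_le_one (k n : ℕ) : q k n ≤ 1 := by
  induction n using Nat.strong_induction_on with
  | _ n ih =>
    cases n with
    | zero => rw [q_zero]
    | succ n =>
      have h := q_rec k n
      have h1 : ∑ j ∈ Finset.range (n + 1 - k), q k j ≤ ∑ j ∈ Finset.range (n + 1 - k), (1 : ℝ) := by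
        apply Finset.sum_le_sum
        intro j hj
        simp at hj
        exact ih j (by omega)
      simp at h1
      have h2 : ((n + 1 - k : ℕ) : ℝ) ≤ (n : ℝ) + 1 := by
        exact_mod_cast (by omega : n + 1 - k ≤ n + 1)
      have h3 : (0 : ℝ) ≤ n := by positivity
      nlinarith

lemma q_diff (k n : ℕ) : 2 * (((n + 1 : ℕ) : ℝ) * q k (n + 1)) - 2 * ((n : ℝ) * q k n) =
    if k ≤ n then q k (n - k) else 0 := by
  have h1 := q_rec k n
  have h2 : 2 * ((n : ℝ) * q k n) = ∑ j ∈ Finset.range (n - k), q k j := by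
    cases n with
    | zero => simp
    | succ m => rw [← q_rec]; push_cast; ring
  push_cast
  rw [h2, ← mul_assoc, h1]
  split_ifs with h
  · rw [show n + 1 - k = (n - k) + 1 by omega, Finset.sum_range_succ]; ring
  · rw [show n + 1 - k = n - k by omega]; ring

noncomputable def Q (k : ℕ) (z : ℝ) : ℝ := ∑' n, q k n * z ^ n

lemma summable_q (k : ℕ) {z : ℝ} (hz : |z| < 1) : Summable (fun n => q k n * z ^ n) := by
  refine Summable.of_norm_bounded (summable_geometric_of_lt_one (abs_nonneg z) hz) fun n => ?_
  rw [norm_mul, norm_pow, Real.norm_eq_abs, Real.norm_eq_abs, abs_of_nonneg (q_nonneg k n)]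
  exact mul_le_of_le_one_left (by positivity) (q_le_one k n)

lemma summable_nr {r : ℝ} (hr0 : 0 < r) (hr : r < 1) : Summable (fun n : ℕ => (n : ℝ) * r ^ (n - 1)) := by
  have h := summable_pow_mul_geometric_of_norm_lt_one (R := ℝ) 1 (r := r)
    (by rw [Real.norm_eq_abs, abs_of_pos hr0]; exact hr)
  refine (h.mul_left (1 / r)).congr fun n => ?_
  cases n with
  | zero => simp
  | succ n => simp; field_simp; ring

lemma bound_term (k n : ℕ) {r y : ℝ} (hy : |y| ≤ r) :
    ‖q k n * ((n : ℝ) * y ^ (n - 1))‖ ≤ (n : ℝ) * r ^ (n - 1) := by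
  rw [norm_mul, norm_mul, norm_pow, Real.norm_eq_abs, Real.norm_eq_abs, Real.norm_eq_abs,
    abs_of_nonneg (q_nonneg k n), Nat.abs_cast]
  have h1 : |y| ^ (n - 1) ≤ r ^ (n - 1) := pow_le_pow_left₀ (abs_nonneg y) hy _
  calc q k n * ((n : ℝ) * |y| ^ (n - 1)) ≤ 1 * ((n : ℝ) * |y| ^ (n - 1)) := by
        apply mul_le_mul_of_nonneg_right (q_le_one k n); positivity
    _ ≤ _ := by rw [one_mul]; gcongr

lemma Q_deriv (k : ℕ) {z : ℝ} (hz : |z| < 1) : 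
    HasDerivAt (Q k) (z ^ k / (2 * (1 - z)) * Q k z) z := by
  obtain ⟨r, hr1, hr2⟩ := exists_between hz
  have hr0 : 0 < r := lt_of_le_of_lt (abs_nonneg z) hr1
  have hd : HasDerivAt (Q k) (∑' n, q k n * ((n : ℝ) * z ^ (n - 1))) z := by
    refine hasDerivAt_tsum_of_isPreconnected (𝕜 := ℝ) (t := Metric.ball (0 : ℝ) r) (y₀ := 0)
      (g := fun n z => q k n * z ^ n) (g' := fun n z => q k n * ((n : ℝ) * z ^ (n - 1)))
      (summable_nr hr0 hr2) Metric.isOpen_ball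
      (convex_ball _ _).isPreconnected ?_ ?_ ?_ ?_ ?_
    · intro n y _
      exact (hasDerivAt_pow n y).const_mul _
    · intro n y hy
      apply bound_term
      exact (mem_ball_zero_iff.1 hy).le
    · simpa using hr0
    · exact summable_q k (by simp)
    · simpa using hr1
  have hsD : Summable (fun n : ℕ => q k n * ((n : ℝ) * z ^ (n - 1))) :=
    Summable.of_norm_bounded (summable_nr hr0 hr2) fun n => bound_term k n hr1.le
  set D := ∑' n, q k n * ((n : ℝ) * z ^ (n - 1)) with hD
  have h1 : HasSum (fun n : ℕ => q k n * ((n : ℝ) * z ^ (n - 1))) D := hsD.hasSum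
  have h2 : HasSum (fun n : ℕ => q k (n + 1) * (((n + 1 : ℕ) : ℝ) * z ^ n)) D := by
    have := (hasSum_nat_add_iff' 1).2 h1
    simpa using this
  have h3 : HasSum (fun n : ℕ => q k n * ((n : ℝ) * z ^ n)) (z * D) := by
    refine (h1.mul_left z).congr_fun ?_
    intro n
    cases n with
    | zero => simp
    | succ n => simp [pow_succ]; ring
  have h4 : HasSum (fun n : ℕ => (if k ≤ n then q k (n - k) else 0) * z ^ n) (z ^ k * Q k z) := by
    have h5 : HasSum (fun n : ℕ => q k n * z ^ n) (Q k z) := (summable_q k hz).hasSum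
    rw [← hasSum_nat_add_iff' k]
    have h6 : ∑ i ∈ Finset.range k, (if k ≤ i then q k (i - k) else 0) * z ^ i = 0 := by
      apply Finset.sum_eq_zero
      intro i hi
      simp at hi
      rw [if_neg (by omega)]; simp
    rw [h6, sub_zero]
    refine (h5.mul_left (z ^ k)).congr_fun ?_
    intro n
    rw [if_pos (by omega), Nat.add_sub_cancel, pow_add]
    ring
  have h7 := (h2.mul_left 2).sub (h3.mul_left 2)
  have h8 : 2 * D - 2 * (z * D) = z ^ k * Q k z := by
    refine h7.unique (h4.congr_fun ?_)
    intro n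
    rw [← q_diff]; ring
  have hz1 : 1 - z ≠ 0 := by
    have := (abs_lt.1 hz).2
    linarith
  have h9 : D = z ^ k / (2 * (1 - z)) * Q k z := by
    field_simp
    linarith
  rw [← h9]
  exact hd

noncomputable def Lg (k : ℕ) (z : ℝ) : ℝ :=
  (-Real.log (1 - z) - ∑ l ∈ Finset.range k, z ^ (l + 1) / ((l : ℝ) + 1)) / 2

lemma Lg_deriv (k : ℕ) {z : ℝ} (hz : |z| < 1) : HasDerivAt (Lg k) (z ^ k / (2 * (1 - z))) z := by
  have hz1 : 1 - z ≠ 0 := by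
    have := (abs_lt.1 hz).2
    linarith
  have h1 : HasDerivAt (fun z : ℝ => Real.log (1 - z)) (-1 / (1 - z)) z :=
    ((hasDerivAt_id z).const_sub 1).log hz1
  have h2 : HasDerivAt (fun z : ℝ => ∑ l ∈ Finset.range k, z ^ (l + 1) / ((l : ℝ) + 1))
      (∑ l ∈ Finset.range k, z ^ l) z := by
    apply HasDerivAt.fun_sum
    intro l _
    have := (hasDerivAt_pow (l + 1) z).div_const ((l : ℝ) + 1)
    refine this.congr_deriv ?_
    push_cast
    field_simp
  have h3 := (h1.neg.sub h2).div_const 2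
  refine h3.congr_deriv ?_
  have hz2 : z ≠ 1 := by intro h; apply hz1; rw [h]; ring
  have hz3 : z - 1 ≠ 0 := sub_ne_zero.2 hz2
  rw [geom_sum_eq hz2]
  field_simp
  rw [show z - 1 = -(1 - z) by ring]
  field_simp
  ring

lemma Q_eq (k : ℕ) {z : ℝ} (hz : |z| < 1) : Q k z = Real.exp (Lg k z) := by
  have key : ∀ y ∈ Metric.ball (0 : ℝ) 1, HasDerivAt (fun y => Q k y * Real.exp (- Lg k y)) 0 y := by
    intro y hy
    have hy' : |y| < 1 := by simpa using hy
    have := (Q_deriv k hy').mul (Lg_deriv k hy').neg.exp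
    refine this.congr_deriv ?_
    ring
  have h := Metric.isOpen_ball.is_const_of_deriv_eq_zero (convex_ball (0 : ℝ) 1).isPreconnected
    (fun y hy => (key y hy).differentiableAt.differentiableWithinAt)
    (fun y hy => (key y hy).deriv) (x := z) (y := 0) (by simpa using hz) (by simp)
  have h0 : Q k 0 = 1 := by
    unfold Q
    rw [tsum_eq_single 0]
    · simp [q_zero]
    · intro n hn; simp [hn]
  have h1 : Lg k 0 = 0 := by simp [Lg]
  rw [h0, h1] at h
  simp at h
  rw [Real.exp_neg] at h
  field_simp at h
  exact h

end Cyc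
namespace Cyc
open Filter Topology

section karamata

lemma exp_mem {s : ℝ} (hs0 : 0 < s) (n : ℕ) : Real.exp (-(n * s)) ∈ Set.Icc (0 : ℝ) 1 :=
  ⟨(Real.exp_pos _).le, Real.exp_le_one_iff.2 (by have : (0 : ℝ) ≤ n * s := by positivity
                                                  linarith)⟩

lemma summable_poly {d : ℕ → ℝ} (hd : ∀ n, 0 ≤ d n)
    (hs : ∀ s : ℝ, 0 < s → Summable (fun n : ℕ => d n * Real.exp (-(n * s))))
    (P : Polynomial ℝ) {s : ℝ} (hs0 : 0 < s) :
    Summable (fun n : ℕ => d n * (Real.exp (-(n * s)) * P.eval (Real.exp (-(n * s))))) := by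
  obtain ⟨C, hC⟩ := (isCompact_Icc (a := (0 : ℝ)) (b := 1)).exists_bound_of_continuousOn
    P.continuous.continuousOn
  refine Summable.of_norm_bounded ((hs s hs0).mul_left C) fun n => ?_
  have h1 := hC _ (exp_mem hs0 n)
  rw [← mul_assoc, norm_mul, mul_comm C, Real.norm_of_nonneg (mul_nonneg (hd n) (Real.exp_pos _).le)]
  exact mul_le_mul_of_nonneg_left h1 (mul_nonneg (hd n) (Real.exp_pos _).le)

lemma poly_lim {d : ℕ → ℝ} (hd : ∀ n, 0 ≤ d n)
    (hs : ∀ s : ℝ, 0 < s → Summable (fun n : ℕ => d n * Real.exp (-(n * s))))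
    {L : ℝ} (hL : Tendsto (fun s : ℝ => s * ∑' n : ℕ, d n * Real.exp (-(n * s)))
      (𝓝[>] 0) (𝓝 L)) (P : Polynomial ℝ) :
    Tendsto (fun s : ℝ => s * ∑' n : ℕ, d n * (Real.exp (-(n * s)) * P.eval (Real.exp (-(n * s)))))
      (𝓝[>] 0) (𝓝 (L * ∫ t in (0 : ℝ)..1, P.eval t)) := by
  induction P using Polynomial.induction_on' with
  | add p q hp hq =>
    have h := hp.add hq
    have e : L * (∫ t in (0 : ℝ)..1, p.eval t) + L * (∫ t in (0 : ℝ)..1, q.eval t) =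
        L * ∫ t in (0 : ℝ)..1, (p + q).eval t := by
      rw [← mul_add, ← intervalIntegral.integral_add (p.continuous.intervalIntegrable _ _)
        (q.continuous.intervalIntegrable _ _)]
      simp
    rw [e] at h
    refine h.congr' ?_
    filter_upwards [self_mem_nhdsWithin] with s hs0
    rw [← mul_add, ← (summable_poly hd hs p hs0).tsum_add (summable_poly hd hs q hs0)]
    congr 1
    refine tsum_congr fun n => ?_
    rw [Polynomial.eval_add]; ring
  | monomial j a =>
    have hj : (0 : ℝ) < (j : ℝ) + 1 := by positivity
    have h1 : Tendsto (fun s : ℝ => ((j : ℝ) + 1) * s) (𝓝[>] 0) (𝓝[>] 0) := by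
      apply tendsto_nhdsWithin_of_tendsto_nhds_of_eventually_within
      · have : Tendsto (fun s : ℝ => ((j : ℝ) + 1) * s) (𝓝 0) (𝓝 (((j : ℝ) + 1) * 0)) :=
          tendsto_id.const_mul _
        rw [mul_zero] at this
        exact this.mono_left nhdsWithin_le_nhds
      · filter_upwards [self_mem_nhdsWithin] with s hs0
        exact mul_pos hj hs0
    have h2 := (hL.comp h1).const_mul (a / ((j : ℝ) + 1))
    have e : a / ((j : ℝ) + 1) * L = L * ∫ t in (0 : ℝ)..1, (Polynomial.monomial j a).eval t := by
      simp only [Polynomial.eval_monomial]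
      rw [intervalIntegral.integral_const_mul, integral_pow]
      simp
      ring
    rw [e] at h2
    refine h2.congr' ?_
    filter_upwards [self_mem_nhdsWithin] with s hs0
    simp only [Function.comp]
    rw [show a / ((j : ℝ) + 1) * (((j : ℝ) + 1) * s * ∑' n : ℕ, d n * Real.exp (-(n * (((j : ℝ) + 1) * s))))
      = s * (a * ∑' n : ℕ, d n * Real.exp (-(n * (((j : ℝ) + 1) * s)))) by field_simp]
    rw [← tsum_mul_left]
    congr 1
    refine tsum_congr fun n => ?_
    rw [Polynomial.eval_monomial, ← Real.exp_nat_mul]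
    rw [show -((n : ℝ) * (((j : ℝ) + 1) * s)) = -(n * s) + (j * -(n * s)) by ring, Real.exp_add]
    ring

/-- ramp approximations of `1/t` cut off between `b` and `a` -/
noncomputable def ramp (b a t : ℝ) : ℝ := (max t b)⁻¹ * max 0 (min 1 ((t - b) / (a - b)))

lemma ramp_cont {b a : ℝ} (hb : 0 < b) (hab : b < a) : Continuous (ramp b a) := by
  unfold ramp
  have h1 : Continuous (fun t : ℝ => (max t b)⁻¹) := by
    apply Continuous.inv₀ (by fun_prop)
    intro t
    exact (lt_of_lt_of_le hb (le_max_right _ _)).ne'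
  fun_prop

lemma ramp_nonneg {b a : ℝ} (hb : 0 < b) (t : ℝ) : 0 ≤ ramp b a t := by
  unfold ramp
  have : 0 < max t b := lt_of_lt_of_le hb (le_max_right _ _)
  have := le_max_left 0 (min 1 ((t - b) / (a - b)))
  positivity

lemma ramp_low {b a t : ℝ} (hab : b < a) (ht : t ≤ b) : ramp b a t = 0 := by
  unfold ramp
  have h : (t - b) / (a - b) ≤ 0 := div_nonpos_of_nonpos_of_nonneg (by linarith) (by linarith)
  rw [max_eq_left ((min_le_right _ _).trans h), mul_zero]

lemma ramp_le {b a t : ℝ} (hb : 0 < b) (ht : b ≤ t) : ramp b a t ≤ t⁻¹ := by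
  unfold ramp
  rw [max_eq_left ht]
  have : 0 < t := hb.trans_le ht
  exact mul_le_of_le_one_right (by positivity) (max_le zero_le_one (min_le_left _ _))

lemma ramp_high {b a t : ℝ} (hab : b < a) (ht : a ≤ t) : ramp b a t = t⁻¹ := by
  unfold ramp
  have h : 1 ≤ (t - b) / (a - b) := by
    rw [le_div_iff₀ (by linarith)]; linarith
  rw [max_eq_left (by linarith), min_eq_left h, max_eq_right zero_le_one, mul_one]

lemma int_inv {b : ℝ} (hb : 0 < b) : ∫ t in b..1, t⁻¹ = - Real.log b := by
  rw [integral_inv_of_pos hb one_pos]; simp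

lemma ii_inv {b : ℝ} (hb : 0 < b) : IntervalIntegrable (fun t : ℝ => t⁻¹) MeasureTheory.volume b 1 := by
  apply intervalIntegral.intervalIntegrable_inv
  · intro t ht
    have := (Set.mem_uIcc.1 ht)
    rcases this with h | h <;> linarith
  · exact continuousOn_id

lemma ramp_int_le {b a : ℝ} (hb : 0 < b) (hab : b < a) (ha : a ≤ 1) :
    ∫ t in (0 : ℝ)..1, ramp b a t ≤ - Real.log b := by
  have hc := ramp_cont hb hab
  rw [← intervalIntegral.integral_add_adjacent_intervals (hc.intervalIntegrable 0 b)
    (hc.intervalIntegrable b 1)]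
  have h1 : ∫ t in (0 : ℝ)..b, ramp b a t = 0 := by
    rw [intervalIntegral.integral_congr (g := fun _ => 0)]
    · simp
    · intro t ht
      rw [Set.uIcc_of_le hb.le] at ht
      exact ramp_low hab ht.2
  rw [h1, zero_add, ← int_inv hb]
  apply intervalIntegral.integral_mono_on (by linarith) (hc.intervalIntegrable b 1) (ii_inv hb)
  intro t ht
  exact ramp_le hb ht.1

lemma ramp_int_ge {b a : ℝ} (hb : 0 < b) (hab : b < a) (ha : a ≤ 1) :
    - Real.log a ≤ ∫ t in (0 : ℝ)..1, ramp b a t := by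
  have hc := ramp_cont hb hab
  rw [← intervalIntegral.integral_add_adjacent_intervals (hc.intervalIntegrable 0 a)
    (hc.intervalIntegrable a 1)]
  have h1 : 0 ≤ ∫ t in (0 : ℝ)..a, ramp b a t :=
    intervalIntegral.integral_nonneg (by linarith) fun t _ => ramp_nonneg hb t
  have h2 : ∫ t in a..1, ramp b a t = ∫ t in a..1, t⁻¹ := by
    apply intervalIntegral.integral_congr
    intro t ht
    rw [Set.uIcc_of_le ha] at ht
    exact ramp_high hab ht.1
  rw [h2, int_inv (hb.trans hab)]
  linarith

/-- polynomial majorant -/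
lemma poly_upper {ε : ℝ} (hε : 0 < ε) : ∃ P : Polynomial ℝ,
    (∀ t ∈ Set.Icc (0 : ℝ) 1, 0 ≤ P.eval t) ∧
    (∀ t ∈ Set.Icc (0 : ℝ) 1, Real.exp (-1) ≤ t → t⁻¹ ≤ P.eval t) ∧
    ∫ t in (0 : ℝ)..1, P.eval t ≤ 1 + 3 * ε := by
  have hb : 0 < Real.exp (-(1 + ε)) := Real.exp_pos _
  have hab : Real.exp (-(1 + ε)) < Real.exp (-1) := Real.exp_lt_exp.2 (by linarith)
  have ha : Real.exp (-1) ≤ 1 := Real.exp_le_one_iff.2 (by norm_num)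
  have hc := ramp_cont hb hab
  obtain ⟨p, hp⟩ := exists_polynomial_near_of_continuousOn 0 1 _ hc.continuousOn ε hε
  refine ⟨p + Polynomial.C ε, ?_, ?_, ?_⟩
  · intro t ht
    have := (abs_lt.1 (hp t ht)).1
    have := ramp_nonneg (a := Real.exp (-1)) hb t
    simp; linarith
  · intro t ht h
    have := (abs_lt.1 (hp t ht)).1
    have := ramp_high hab h
    simp; linarith
  · have h1 : ∫ t in (0 : ℝ)..1, (p + Polynomial.C ε).eval t ≤
        ∫ t in (0 : ℝ)..1, (ramp (Real.exp (-(1 + ε))) (Real.exp (-1)) t + 2 * ε) := by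
      apply intervalIntegral.integral_mono_on zero_le_one
        ((p + Polynomial.C ε).continuous.intervalIntegrable _ _)
        ((hc.add continuous_const).intervalIntegrable _ _)
      intro t ht
      have := (abs_lt.1 (hp t ht)).2
      simp only [Polynomial.eval_add, Polynomial.eval_C, Pi.add_apply]; linarith
    rw [intervalIntegral.integral_add (hc.intervalIntegrable _ _) intervalIntegrable_const] at h1
    have h2 := ramp_int_le hb hab ha
    rw [Real.log_exp] at h2
    simp only [intervalIntegral.integral_const, sub_zero, one_smul] at h1
    linarith

lemma poly_lower {ε : ℝ} (hε : 0 < ε) : ∃ P : Polynomial ℝ,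
    (∀ t ∈ Set.Icc (0 : ℝ) 1, t ≤ Real.exp (-1) → P.eval t ≤ 0) ∧
    (∀ t ∈ Set.Icc (0 : ℝ) 1, Real.exp (-1) ≤ t → P.eval t ≤ t⁻¹) ∧
    1 - 3 * ε ≤ ∫ t in (0 : ℝ)..1, P.eval t := by
  by_cases hε1 : 1 < ε
  · refine ⟨0, by simp, ?_, ?_⟩
    · intro t ht _
      simpa using ht.1
    · simp; linarith
  have hb : 0 < Real.exp (-1) := Real.exp_pos _
  have hab : Real.exp (-1) < Real.exp (-(1 - ε)) := Real.exp_lt_exp.2 (by linarith)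
  have ha : Real.exp (-(1 - ε)) ≤ 1 := Real.exp_le_one_iff.2 (by linarith)
  have hc := ramp_cont hb hab
  obtain ⟨p, hp⟩ := exists_polynomial_near_of_continuousOn 0 1 _ hc.continuousOn ε hε
  refine ⟨p - Polynomial.C ε, ?_, ?_, ?_⟩
  · intro t ht h
    have := (abs_lt.1 (hp t ht)).2
    have := ramp_low hab h
    simp; linarith
  · intro t ht h
    have := (abs_lt.1 (hp t ht)).2
    have := ramp_le (a := Real.exp (-(1 - ε))) hb h
    simp; linarith
  · have h1 : ∫ t in (0 : ℝ)..1, (ramp (Real.exp (-1)) (Real.exp (-(1 - ε))) t - 2 * ε) ≤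
        ∫ t in (0 : ℝ)..1, (p - Polynomial.C ε).eval t := by
      apply intervalIntegral.integral_mono_on zero_le_one
        ((hc.sub continuous_const).intervalIntegrable _ _)
        ((p - Polynomial.C ε).continuous.intervalIntegrable _ _)
      intro t ht
      have := (abs_lt.1 (hp t ht)).1
      simp only [Polynomial.eval_sub, Polynomial.eval_C, Pi.sub_apply]; linarith
    rw [intervalIntegral.integral_sub (hc.intervalIntegrable _ _) intervalIntegrable_const] at h1
    have h2 := ramp_int_ge hb hab ha
    rw [Real.log_exp] at h2
    simp only [intervalIntegral.integral_const, sub_zero, one_smul] at h1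
    linarith

theorem karamata {d : ℕ → ℝ} (hd : ∀ n, 0 ≤ d n)
    (hs : ∀ s : ℝ, 0 < s → Summable (fun n : ℕ => d n * Real.exp (-(n * s))))
    {L : ℝ} (hL : Tendsto (fun s : ℝ => s * ∑' n : ℕ, d n * Real.exp (-(n * s)))
      (𝓝[>] 0) (𝓝 L)) :
    Tendsto (fun N : ℕ => (∑ n ∈ Finset.range (N + 1), d n) / N) atTop (𝓝 L) := by
  have hL0 : 0 ≤ L := by
    refine ge_of_tendsto hL ?_
    filter_upwards [self_mem_nhdsWithin] with s hs0
    exact mul_nonneg (le_of_lt hs0) (tsum_nonneg fun n => mul_nonneg (hd n) (Real.exp_pos _).le)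
  have hN : Tendsto (fun N : ℕ => (1 : ℝ) / N) atTop (𝓝[>] 0) := by
    apply tendsto_nhdsWithin_of_tendsto_nhds_of_eventually_within
    · exact tendsto_one_div_atTop_nhds_zero_nat
    · filter_upwards [eventually_gt_atTop 0] with N h
      have : (0 : ℝ) < N := by exact_mod_cast h
      exact one_div_pos.2 this
  -- comparison of n ≤ N
  have hcmp : ∀ N : ℕ, 0 < N → ∀ n : ℕ, n ∈ Finset.range (N + 1) ↔
      Real.exp (-1) ≤ Real.exp (-(n * ((1 : ℝ) / N))) := by
    intro N h n
    have hN' : (0 : ℝ) < N := by exact_mod_cast h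
    rw [Real.exp_le_exp, Finset.mem_range, Nat.lt_succ_iff, neg_le_neg_iff, mul_one_div,
      div_le_one hN', Nat.cast_le]
  have hfin : ∀ N : ℕ, HasSum (fun n => if n ∈ Finset.range (N + 1) then d n else 0)
      (∑ n ∈ Finset.range (N + 1), d n) := by
    intro N
    have := hasSum_sum_of_ne_finset_zero (L := SummationFilter.unconditional ℕ) (f := fun n => if n ∈ Finset.range (N + 1) then d n else 0)
      (s := Finset.range (N + 1)) (by intro b hb; simp only [hb, if_false])
    rwa [Finset.sum_congr rfl (g := d) (by intro n hn; simp only [hn, if_true])] at this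
  rw [tendsto_order]
  constructor
  · intro c hc
    obtain ⟨ε, hε, hε2⟩ : ∃ ε : ℝ, 0 < ε ∧ c < L * (1 - 3 * ε) := by
      refine ⟨(L - c) / (6 * (L + 1)), by apply div_pos <;> linarith, ?_⟩
      have : (L - c) / (6 * (L + 1)) * (6 * (L + 1)) = L - c := by field_simp
      nlinarith [div_pos (show 0 < L - c by linarith) (show 0 < 6 * (L + 1) by linarith)]
    obtain ⟨P, hP1, hP2, hP3⟩ := poly_lower hε
    have hlim := (poly_lim hd hs hL P).comp hN
    have hlt : c < L * ∫ t in (0 : ℝ)..1, P.eval t :=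
      lt_of_lt_of_le hε2 (mul_le_mul_of_nonneg_left hP3 hL0)
    filter_upwards [hlim.eventually_const_lt hlt, eventually_gt_atTop 0] with N h1 h2
    have hN' : (0 : ℝ) < N := by exact_mod_cast h2
    refine lt_of_lt_of_le h1 ?_
    simp only [Function.comp]
    rw [show (∑ n ∈ Finset.range (N + 1), d n) / (N : ℝ) = 1 / N * ∑ n ∈ Finset.range (N + 1), d n by
      ring]
    refine mul_le_mul_of_nonneg_left ?_ (by positivity)
    rw [← (hfin N).tsum_eq]
    refine (summable_poly hd hs P (by positivity)).tsum_le_tsum (fun n => ?_) (hfin N).summable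
    have hm := exp_mem (show (0 : ℝ) < 1 / N by positivity) n
    have hpos := Real.exp_pos (-(n * ((1 : ℝ) / N)))
    split_ifs with h
    · have h3 := hP2 _ hm ((hcmp N h2 n).1 h)
      apply mul_le_of_le_one_right (hd n)
      calc _ ≤ _ := mul_le_mul_of_nonneg_left h3 hpos.le
        _ = 1 := mul_inv_cancel₀ hpos.ne'
    · rw [hcmp N h2 n, not_le] at h
      have h3 := hP1 _ hm h.le
      exact mul_nonpos_of_nonneg_of_nonpos (hd n) (mul_nonpos_of_nonneg_of_nonpos hpos.le h3)
  · intro c hc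
    obtain ⟨ε, hε, hε2⟩ : ∃ ε : ℝ, 0 < ε ∧ L * (1 + 3 * ε) < c := by
      refine ⟨(c - L) / (6 * (L + 1)), by apply div_pos <;> linarith, ?_⟩
      have : (c - L) / (6 * (L + 1)) * (6 * (L + 1)) = c - L := by field_simp
      nlinarith [div_pos (show 0 < c - L by linarith) (show 0 < 6 * (L + 1) by linarith)]
    obtain ⟨P, hP1, hP2, hP3⟩ := poly_upper hε
    have hlim := (poly_lim hd hs hL P).comp hN
    have hlt : L * ∫ t in (0 : ℝ)..1, P.eval t < c :=
      lt_of_le_of_lt (mul_le_mul_of_nonneg_left hP3 hL0) hε2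
    filter_upwards [hlim.eventually_lt_const hlt, eventually_gt_atTop 0] with N h1 h2
    have hN' : (0 : ℝ) < N := by exact_mod_cast h2
    refine lt_of_le_of_lt ?_ h1
    simp only [Function.comp]
    rw [show (∑ n ∈ Finset.range (N + 1), d n) / (N : ℝ) = 1 / N * ∑ n ∈ Finset.range (N + 1), d n by
      ring]
    refine mul_le_mul_of_nonneg_left ?_ (by positivity)
    rw [← (hfin N).tsum_eq]
    refine (hfin N).summable.tsum_le_tsum (fun n => ?_) (summable_poly hd hs P (by positivity))
    have hm := exp_mem (show (0 : ℝ) < 1 / N by positivity) n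
    have hpos := Real.exp_pos (-(n * ((1 : ℝ) / N)))
    split_ifs with h
    · have h3 := hP2 _ hm ((hcmp N h2 n).1 h)
      apply le_mul_of_one_le_right (hd n)
      calc 1 = _ := (mul_inv_cancel₀ hpos.ne').symm
        _ ≤ _ := mul_le_mul_of_nonneg_left h3 hpos.le
    · exact mul_nonneg (hd n) (mul_nonneg hpos.le (hP1 _ hm))

end karamata
end Cyc
namespace Cyc
open MeasureTheory Filter Topology

lemma ii_of_Ioi {φ : ℝ → ℝ} {a x y : ℝ} (hax : a ≤ x) (hxy : x ≤ y) (h : IntegrableOn φ (Set.Ioi a)) :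
    IntervalIntegrable φ volume x y := by
  rw [intervalIntegrable_iff_integrableOn_Ioc_of_le hxy]
  exact h.mono_set (fun z hz => lt_of_le_of_lt hax hz.1)

lemma cell_upper {φ : ℝ → ℝ} (hφ : AntitoneOn φ (Set.Ioi 0)) {x s : ℝ} (hx : 0 ≤ x) (hs : 0 < s)
    (hi : IntervalIntegrable φ volume x (x+s)) : s * φ (x+s) ≤ ∫ y in x..(x+s), φ y := by
  have h := intervalIntegral.integral_mono_on_of_le_Ioo (f := fun _ => φ (x+s)) (g := φ) (μ := volume)
    (a := x) (b := x+s) (by linarith) (by simp) hi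
    (fun y hy => hφ (by simp; linarith [hy.1]) (by simp; linarith) hy.2.le)
  simpa using h

lemma cell_lower {φ : ℝ → ℝ} (hφ : AntitoneOn φ (Set.Ioi 0)) {x s : ℝ} (hx : 0 < x) (hs : 0 < s)
    (hi : IntervalIntegrable φ volume x (x+s)) : ∫ y in x..(x+s), φ y ≤ s * φ x := by
  have h := intervalIntegral.integral_mono_on_of_le_Ioo (f := φ) (g := fun _ => φ x) (μ := volume)
    (a := x) (b := x+s) (by linarith) hi (by simp)
    (fun y hy => hφ (by simpa using hx) (by simp; linarith [hy.1]) hy.1.le)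
  simpa using h

lemma riemann_upper {φ : ℝ → ℝ} (hφ : AntitoneOn φ (Set.Ioi 0)) (h0 : ∀ x > 0, 0 ≤ φ x)
    {a s : ℝ} (ha : 0 ≤ a) (hs : 0 < s) (hi : IntegrableOn φ (Set.Ioi a)) :
    Summable (fun l : ℕ => s * φ (a + ((l:ℝ)+1)*s)) ∧
      ∑' l : ℕ, s * φ (a + ((l:ℝ)+1)*s) ≤ ∫ x in Set.Ioi a, φ x := by
  have hnn : ∀ l : ℕ, 0 ≤ s * φ (a + ((l:ℝ)+1)*s) := fun l =>
    mul_nonneg hs.le (h0 _ (by positivity))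
  have hb : ∀ N : ℕ, ∑ l ∈ Finset.range N, s * φ (a + ((l:ℝ)+1)*s) ≤ ∫ x in Set.Ioi a, φ x := by
    intro N
    have hii : ∀ k < N, IntervalIntegrable φ volume (a + ((k:ℕ):ℝ)*s) (a + ((k+1:ℕ):ℝ)*s) := by
      intro k _
      refine ii_of_Ioi (a := a) ?_ ?_ hi
      · have : 0 ≤ (k:ℝ)*s := by positivity
        linarith
      · push_cast; linarith
    have h1 := intervalIntegral.sum_integral_adjacent_intervals (a := fun k : ℕ => a + (k:ℝ)*s) hii
    calc _ ≤ ∑ k ∈ Finset.range N, ∫ x in (a + ((k:ℕ):ℝ)*s)..(a + ((k+1:ℕ):ℝ)*s), φ x := by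
          refine Finset.sum_le_sum (fun k hk => ?_)
          have e : a + ((k+1:ℕ):ℝ)*s = (a + (k:ℝ)*s) + s := by push_cast; ring
          have e2 : a + ((k:ℝ)+1)*s = (a + (k:ℝ)*s) + s := by ring
          have := hii k (Finset.mem_range.1 hk)
          rw [e] at this
          rw [e, e2]
          exact cell_upper hφ (by positivity) hs this
      _ = ∫ x in (a + ((0:ℕ):ℝ)*s)..(a + (N:ℝ)*s), φ x := h1
      _ ≤ _ := by
          have : 0 ≤ (N:ℝ)*s := by positivity
          rw [intervalIntegral.integral_of_le (by simpa using this)]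
          refine setIntegral_mono_set hi ?_ ?_
          · filter_upwards [ae_restrict_mem measurableSet_Ioi] with x hx
            exact h0 x (lt_of_le_of_lt ha hx)
          · refine Eventually.of_forall (fun x hx => ?_)
            have h3 := hx.1
            simp only [Nat.cast_zero, zero_mul, add_zero] at h3
            exact h3
  exact ⟨summable_of_sum_range_le hnn hb, Real.tsum_le_of_sum_range_le hnn hb⟩

lemma riemann_lower {φ : ℝ → ℝ} (hφ : AntitoneOn φ (Set.Ioi 0))
    {a s : ℝ} (ha : 0 ≤ a) (hs : 0 < s) (hi : IntegrableOn φ (Set.Ioi (a+s)))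
    (hsum : Summable (fun l : ℕ => s * φ (a + ((l:ℝ)+1)*s))) :
    ∫ x in Set.Ioi (a+s), φ x ≤ ∑' l : ℕ, s * φ (a + ((l:ℝ)+1)*s) := by
  have hb : ∀ N : ℕ, ∫ x in (a+s)..(a+s+(N:ℝ)*s), φ x ≤ ∑ l ∈ Finset.range N, s * φ (a + ((l:ℝ)+1)*s) := by
    intro N
    have hii : ∀ k < N, IntervalIntegrable φ volume (a + s + ((k:ℕ):ℝ)*s) (a + s + ((k+1:ℕ):ℝ)*s) := by
      intro k _
      refine ii_of_Ioi (a := a+s) ?_ ?_ hi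
      · have : 0 ≤ (k:ℝ)*s := by positivity
        linarith
      · push_cast; linarith
    have h1 := intervalIntegral.sum_integral_adjacent_intervals (a := fun k : ℕ => a + s + (k:ℝ)*s) hii
    simp only [Nat.cast_zero, zero_mul, add_zero] at h1
    rw [← h1]
    refine Finset.sum_le_sum (fun k hk => ?_)
    have e : a + s + ((k+1:ℕ):ℝ)*s = (a + s + (k:ℝ)*s) + s := by push_cast; ring
    have e2 : a + ((k:ℝ)+1)*s = a + s + (k:ℝ)*s := by ring
    have := hii k (Finset.mem_range.1 hk)
    rw [e] at this
    rw [e, e2]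
    exact cell_lower hφ (by positivity) hs this
  have ht : Tendsto (fun N : ℕ => a+s+(N:ℝ)*s) atTop atTop :=
    tendsto_atTop_add_const_left _ _ (tendsto_natCast_atTop_atTop.atTop_mul_const hs)
  exact le_of_tendsto_of_tendsto' (intervalIntegral_tendsto_integral_Ioi _ hi ht)
    hsum.hasSum.tendsto_sum_nat hb

noncomputable def psi (y : ℝ) : ℝ := Real.exp (-y) / y

lemma psi_anti : AntitoneOn psi (Set.Ioi 0) := by
  intro x hx y hy hxy
  have hx : 0 < x := hx
  unfold psi
  gcongr

lemma psi_nonneg : ∀ x > 0, 0 ≤ psi x := fun x hx => by unfold psi; positivity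

lemma exp_int (c : ℝ) : IntegrableOn (fun y : ℝ => Real.exp (-y)) (Set.Ioi c) :=
  integrableOn_exp_neg_Ioi c

lemma psi_int {c : ℝ} (hc : 0 < c) : IntegrableOn psi (Set.Ioi c) := by
  refine Integrable.mono' ((exp_int c).div_const c) ?_ ?_
  · have : Measurable psi := by unfold psi; fun_prop
    exact this.aestronglyMeasurable
  · filter_upwards [ae_restrict_mem measurableSet_Ioi] with x hx
    have hx' : c < x := hx
    have : 0 < x := hc.trans hx'
    rw [Real.norm_of_nonneg (psi_nonneg x this)]
    unfold psi
    gcongr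

lemma Efun_eq (x : ℝ) : Efun x = ∫ y in Set.Ioi x, psi y := rfl

lemma two_Lg (k : ℕ) {s : ℝ} (hs : 0 < s) :
    HasSum (fun l : ℕ => s * psi ((k:ℝ)*s + ((l:ℝ)+1)*s)) (2 * Lg k (Real.exp (-s))) := by
  have hz : |Real.exp (-s)| < 1 := by rw [abs_of_pos (Real.exp_pos _)]; simpa using hs
  have h := Real.hasSum_pow_div_log_of_abs_lt_one hz
  have h2 := (hasSum_nat_add_iff' k).2 h
  have e1 : (fun l : ℕ => s * psi ((k:ℝ)*s + ((l:ℝ)+1)*s)) =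
      fun l : ℕ => Real.exp (-s) ^ (l + k + 1) / (((l + k : ℕ) : ℝ) + 1) := by
    funext l
    unfold psi
    rw [← Real.exp_nat_mul]
    push_cast
    have : (k:ℝ)*s + ((l:ℝ)+1)*s = ((l:ℝ)+k+1)*s := by ring
    rw [this]
    have h3 : ((l:ℝ)+k+1) ≠ 0 := by positivity
    rw [show -(((l:ℝ)+k+1)*s) = (↑l + ↑k + 1) * -s by ring]
    field_simp
  have e2 : 2 * Lg k (Real.exp (-s)) = -Real.log (1 - Real.exp (-s)) -
      ∑ i ∈ Finset.range k, Real.exp (-s) ^ (i + 1) / ((i:ℝ) + 1) := by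
    unfold Lg; ring
  rw [e1, e2]
  exact h2

lemma Lg_lower (k : ℕ) {s : ℝ} (hs : 0 < s) :
    Efun (((k:ℝ)+1)*s) ≤ 2 * Lg k (Real.exp (-s)) := by
  have h := two_Lg k hs
  have := riemann_lower psi_anti (a := (k:ℝ)*s) (by positivity) hs (psi_int (by positivity)) h.summable
  rw [h.tsum_eq] at this
  rwa [Efun_eq, show ((k:ℝ)+1)*s = (k:ℝ)*s+s by ring]

lemma Lg_upper (k : ℕ) {s : ℝ} (hs : 0 < s) :
    2 * Lg (k+1) (Real.exp (-s)) ≤ Efun (((k:ℝ)+1)*s) := by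
  have h := two_Lg (k+1) hs
  push_cast at h
  have := (riemann_upper psi_anti psi_nonneg (a := ((k:ℝ)+1)*s) (by positivity) hs (psi_int (by positivity))).2
  rwa [h.tsum_eq] at this

noncomputable def phi (x : ℝ) : ℝ := Real.exp (Efun x / 2 - x)

lemma Efun_anti : AntitoneOn Efun (Set.Ioi 0) := by
  intro x hx y hy hxy
  have hx : 0 < x := hx
  rw [Efun_eq, Efun_eq]
  refine setIntegral_mono_set (psi_int hx) ?_ ?_
  · filter_upwards [ae_restrict_mem measurableSet_Ioi] with z hz
    exact psi_nonneg z (hx.trans hz)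
  · exact Eventually.of_forall (fun z hz => lt_of_le_of_lt hxy hz)

lemma phi_nonneg : ∀ x > 0, 0 ≤ phi x := fun _ _ => (Real.exp_pos _).le

lemma phi_anti : AntitoneOn phi (Set.Ioi 0) := by
  intro x hx y hy hxy
  have := Efun_anti hx hy hxy
  unfold phi
  gcongr

lemma Efun_le_one {x : ℝ} (hx : 1 ≤ x) : Efun x ≤ 1 := by
  rw [Efun_eq]
  calc _ ≤ ∫ y in Set.Ioi x, Real.exp (-y) := by
        refine setIntegral_mono_on (psi_int (by linarith)) (exp_int x) measurableSet_Ioi ?_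
        intro y hy
        have hy : x < y := hy
        unfold psi
        exact div_le_self (Real.exp_pos _).le (by linarith)
    _ = Real.exp (-x) := integral_exp_neg_Ioi x
    _ ≤ 1 := by simp; linarith

lemma Efun_le_log {x : ℝ} (hx : 0 < x) (hx1 : x ≤ 1) : Efun x ≤ 1 - Real.log x := by
  have h1 : Efun x = (∫ y in x..1, psi y) + Efun 1 := by
    rw [Efun_eq, Efun_eq, intervalIntegral.integral_of_le hx1,
      ← setIntegral_union (Set.Ioc_disjoint_Ioi le_rfl) measurableSet_Ioi
        ((psi_int hx).mono_set Set.Ioc_subset_Ioi_self) (psi_int one_pos),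
      Set.Ioc_union_Ioi_eq_Ioi hx1]
  have h2 : ∫ y in x..1, psi y ≤ ∫ y in x..1, 1/y := by
    refine intervalIntegral.integral_mono_on hx1 (ii_of_Ioi le_rfl hx1 (psi_int hx)) ?_ ?_
    · refine intervalIntegral.intervalIntegrable_one_div (fun y hy => ?_) continuousOn_id
      rw [Set.uIcc_of_le hx1] at hy
      have := hy.1
      have h0 : y ≠ 0 := by linarith
      exact h0
    · intro y hy
      have hy0 : 0 < y := lt_of_lt_of_le hx hy.1
      unfold psi
      gcongr
      simp; linarith
  rw [integral_one_div_of_pos hx one_pos] at h2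
  have : Real.log (1/x) = - Real.log x := by simp
  linarith [Efun_le_one (le_refl (1:ℝ))]

lemma phi_int : IntegrableOn phi (Set.Ioi 0) := by
  have g1 := Real.GammaIntegral_convergent (s := 1/2) (by norm_num)
  have g2 := exp_int 0
  refine Integrable.mono' ((g1.add g2).const_mul (Real.exp (1/2))) ?_ ?_
  · exact (aemeasurable_restrict_of_antitoneOn measurableSet_Ioi phi_anti).aestronglyMeasurable
  · filter_upwards [ae_restrict_mem measurableSet_Ioi] with x hx
    have hx : 0 < x := hx
    rw [Real.norm_of_nonneg (phi_nonneg x hx)]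
    have p1 : 0 ≤ Real.exp (-x) * x^((1/2:ℝ)-1) := by positivity
    have p2 : 0 ≤ Real.exp (-x) := by positivity
    have p3 : 0 ≤ Real.exp (1/2) := by positivity
    simp only [Pi.add_apply]
    rcases le_total x 1 with h | h
    · have e : phi x ≤ Real.exp (1/2) * (Real.exp (-x) * x^((1/2:ℝ)-1)) := by
        rw [Real.rpow_def_of_pos hx, ← Real.exp_add, ← Real.exp_add]
        unfold phi
        have := Efun_le_log hx h
        apply Real.exp_le_exp.2
        linarith
      nlinarith
    · have e : phi x ≤ Real.exp (1/2) * Real.exp (-x) := by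
        rw [← Real.exp_add]
        have := Efun_le_one h
        apply Real.exp_le_exp.2
        linarith
      nlinarith
end Cyc
namespace Cyc
open MeasureTheory Filter Topology

noncomputable def dd : ℕ → ℝ
  | 0 => 0
  | n+1 => (∑ p ∈ Finset.HasAntidiagonal.antidiagonal n, q p.1 p.2) / 2

lemma dd_nonneg (n : ℕ) : 0 ≤ dd n := by
  cases n with
  | zero => exact le_rfl
  | succ n =>
    have : 0 ≤ ∑ p ∈ Finset.HasAntidiagonal.antidiagonal n, q p.1 p.2 := Finset.sum_nonneg (fun p _ => q_nonneg _ _)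
    show 0 ≤ _ / 2
    positivity

lemma q_diag (N : ℕ) : (N:ℝ) * q N N = 0 := by
  cases N with
  | zero => simp
  | succ m =>
    have := q_rec (m+1) m
    simp only [Nat.sub_self, Finset.range_zero, Finset.sum_empty] at this
    push_cast
    linarith

lemma dd_sum (N : ℕ) : ∑ n ∈ Finset.range (N+1), dd n = (N:ℝ) * ∑ k ∈ Finset.range N, q k N := by
  induction N with
  | zero => simp [dd]
  | succ N ih =>
    rw [Finset.sum_range_succ, ih]
    have h1 : dd (N+1) = (∑ k ∈ Finset.range (N+1), q k (N-k)) / 2 := by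
      show (∑ p ∈ Finset.HasAntidiagonal.antidiagonal N, q p.1 p.2) / 2 = _
      rw [Finset.Nat.sum_antidiagonal_eq_sum_range_succ (fun k j => q k j)]
    have h2 : ∑ k ∈ Finset.range (N+1), q k (N-k) =
        ∑ k ∈ Finset.range (N+1), (2*(((N+1:ℕ):ℝ)*q k (N+1)) - 2*((N:ℝ)*q k N)) := by
      refine Finset.sum_congr rfl (fun k hk => ?_)
      rw [q_diff, if_pos (by have := Finset.mem_range.1 hk; omega)]
    rw [h1, h2, Finset.sum_sub_distrib]
    simp only [← Finset.mul_sum]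
    rw [Finset.sum_range_succ (fun k => q k N)]
    have := q_diag N
    linarith

lemma Lg_le {z : ℝ} (hz : 0 ≤ z) (k : ℕ) : Lg k z ≤ Lg 0 z := by
  unfold Lg
  have : 0 ≤ ∑ l ∈ Finset.range k, z^(l+1)/((l:ℝ)+1) := Finset.sum_nonneg (fun l _ => by positivity)
  simp only [Finset.range_zero, Finset.sum_empty]
  linarith

lemma dd_hasSum {z : ℝ} (hz : 0 < z) (hz1 : z < 1) :
    Summable (fun k : ℕ => z^(k+1) * Real.exp (Lg k z)) ∧
    HasSum (fun n : ℕ => dd n * z^n) ((∑' k : ℕ, z^(k+1) * Real.exp (Lg k z)) / 2) := by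
  have hza : |z| < 1 := by rwa [abs_of_pos hz]
  have hG : Summable (fun k : ℕ => z^(k+1) * Real.exp (Lg k z)) := by
    refine Summable.of_nonneg_of_le (fun k => by positivity) (g := fun k : ℕ => z^(k+1) * Real.exp (Lg k z))
      (f := fun k : ℕ => z^k * (z * Real.exp (Lg 0 z))) (fun k => ?_)
      ((summable_geometric_of_lt_one hz.le hz1).mul_right _)
    have := Real.exp_le_exp.2 (Lg_le hz.le k)
    rw [← mul_assoc, ← pow_succ]
    gcongr
  refine ⟨hG, ?_⟩
  let F : ℕ × ℕ → ℝ := fun p => q p.1 p.2 * z^(p.1+p.2+1)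
  have hrow : ∀ k, HasSum (fun j => F (k, j)) (z^(k+1) * Real.exp (Lg k z)) := by
    intro k
    rw [← Q_eq k hza]
    have := (summable_q k hza).hasSum.mul_left (z^(k+1))
    refine this.congr_fun ?_ |> fun h => h
    intro j
    show q k j * z^(k+j+1) = z^(k+1) * (q k j * z^j)
    ring
  have hF0 : 0 ≤ F := fun p => mul_nonneg (q_nonneg _ _) (by positivity)
  have hFs : Summable F := by
    rw [summable_prod_of_nonneg hF0]
    refine ⟨fun k => (hrow k).summable, ?_⟩
    simpa only [fun k => (hrow k).tsum_eq] using hG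
  have hF : HasSum F (∑' k : ℕ, z^(k+1) * Real.exp (Lg k z)) := by
    have h1 := hFs.hasSum.prod_fiberwise hrow
    rw [h1.tsum_eq]
    exact hFs.hasSum
  have h2 := (Finset.HasAntidiagonal.sigmaAntidiagonalEquivProd (A := ℕ)).hasSum_iff.2 hF
  have h3 : HasSum (fun n : ℕ => ∑ p ∈ Finset.HasAntidiagonal.antidiagonal n, F p) (∑' k : ℕ, z^(k+1) * Real.exp (Lg k z)) := by
    refine h2.sigma (fun n => ?_)
    rw [← Finset.sum_coe_sort]
    exact hasSum_fintype _
  have h4 : HasSum (fun n : ℕ => dd (n+1) * z^(n+1)) ((∑' k : ℕ, z^(k+1) * Real.exp (Lg k z)) / 2) := by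
    have e : (fun n : ℕ => dd (n+1) * z^(n+1)) = fun n : ℕ => (∑ p ∈ Finset.HasAntidiagonal.antidiagonal n, F p) / 2 := by
      funext n
      have : ∑ p ∈ Finset.HasAntidiagonal.antidiagonal n, F p = (∑ p ∈ Finset.HasAntidiagonal.antidiagonal n, q p.1 p.2) * z^(n+1) := by
        rw [Finset.sum_mul]
        refine Finset.sum_congr rfl (fun p hp => ?_)
        rw [← Finset.HasAntidiagonal.mem_antidiagonal.1 hp]
      rw [this]
      show (∑ p ∈ Finset.HasAntidiagonal.antidiagonal n, q p.1 p.2) / 2 * z^(n+1) = _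
      ring
    rw [e]
    exact h3.div_const 2
  have h5 := (hasSum_nat_add_iff (f := fun n : ℕ => dd n * z^n) 1).1 h4
  simpa [dd] using h5

lemma first_term {s : ℝ} (hs : 0 < s) : s * (Real.exp (-s) * Real.exp (Lg 0 (Real.exp (-s)))) ≤ √s := by
  have h1 : s * Real.exp (-s) ≤ 1 - Real.exp (-s) := by
    have h2 := Real.add_one_le_exp s
    have h3 : Real.exp s * Real.exp (-s) = 1 := by rw [← Real.exp_add]; simp
    have := mul_le_mul_of_nonneg_right h2 (Real.exp_pos (-s)).le
    linarith
  have h4 := Real.log_le_log (by positivity) h1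
  rw [Real.log_mul hs.ne' (Real.exp_pos _).ne', Real.log_exp] at h4
  have h5 : Lg 0 (Real.exp (-s)) = -Real.log (1 - Real.exp (-s)) / 2 := by simp [Lg]
  rw [h5, Real.sqrt_eq_rpow, Real.rpow_def_of_pos hs, ← Real.exp_add]
  nth_rewrite 1 [← Real.exp_log hs]
  rw [← Real.exp_add]
  apply Real.exp_le_exp.2
  linarith

lemma main_sum_bounds {s : ℝ} (hs : 0 < s) :
    (∫ x in Set.Ioi s, phi x) ≤ s * ∑' k : ℕ, Real.exp (-s)^(k+1) * Real.exp (Lg k (Real.exp (-s))) ∧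
    s * ∑' k : ℕ, Real.exp (-s)^(k+1) * Real.exp (Lg k (Real.exp (-s))) ≤ √s + ∫ x in Set.Ioi 0, phi x := by
  have hG := (dd_hasSum (Real.exp_pos (-s)) (by simpa using hs)).1
  have hG' := hG.mul_left s
  obtain ⟨hsum, hup⟩ := riemann_upper phi_anti phi_nonneg (le_refl 0) hs phi_int
  have hlo := riemann_lower phi_anti (le_refl 0) hs (phi_int.mono_set (Set.Ioi_subset_Ioi (by linarith))) hsum
  simp only [zero_add] at hsum hup hlo
  have hpow : ∀ k : ℕ, Real.exp (-s)^(k+1) = Real.exp (-(((k:ℝ)+1)*s)) := by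
    intro k
    rw [← Real.exp_nat_mul]; push_cast; ring_nf
  rw [← tsum_mul_left]
  constructor
  · refine hlo.trans (Summable.tsum_le_tsum (fun k => ?_) hsum hG')
    rw [hpow]
    unfold phi
    rw [← Real.exp_add]
    gcongr
    have := Lg_lower k hs
    linarith
  · rw [hG'.tsum_eq_zero_add]
    refine add_le_add ?_ (le_trans (Summable.tsum_le_tsum (fun k => ?_) ((summable_nat_add_iff 1).2 hG') hsum) hup)
    · simpa using first_term hs
    · have h1 := Lg_upper k hs
      have h2 : Real.exp (-s)^(k+1+1) ≤ Real.exp (-(((k:ℝ)+1)*s)) := by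
        rw [← hpow]
        exact pow_le_pow_of_le_one (Real.exp_pos _).le (by simp; linarith) (by omega)
      have h3 : Real.exp (Lg (k+1) (Real.exp (-s))) ≤ Real.exp (Efun (((k:ℝ)+1)*s) / 2) := by
        apply Real.exp_le_exp.2; linarith
      have h4 : phi (((k:ℝ)+1)*s) = Real.exp (-(((k:ℝ)+1)*s)) * Real.exp (Efun (((k:ℝ)+1)*s) / 2) := by
        unfold phi; rw [← Real.exp_add]; ring_nf
      rw [h4]
      gcongr

lemma main_sum_lim :
    Tendsto (fun s : ℝ => s * ∑' k : ℕ, Real.exp (-s)^(k+1) * Real.exp (Lg k (Real.exp (-s))))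
      (𝓝[>] 0) (𝓝 (∫ x in Set.Ioi 0, phi x)) := by
  have hid : Tendsto (fun s : ℝ => s) (𝓝[>] (0:ℝ)) (𝓝 0) := tendsto_id.mono_left nhdsWithin_le_nhds
  have h1 : Tendsto (fun s : ℝ => ∫ x in Set.Ioi s, phi x) (𝓝[>] 0) (𝓝 (∫ x in Set.Ioi 0, phi x)) := by
    have hc := (aecover_Ioi_of_Ioi (μ := volume) hid).integral_tendsto_of_countably_generated phi_int
    refine hc.congr' ?_
    filter_upwards [self_mem_nhdsWithin] with s hs
    rw [Measure.restrict_restrict measurableSet_Ioi, Set.inter_eq_left.2 (Set.Ioi_subset_Ioi (le_of_lt hs))]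
  have h2 : Tendsto (fun s : ℝ => √s + ∫ x in Set.Ioi 0, phi x) (𝓝[>] 0) (𝓝 (∫ x in Set.Ioi 0, phi x)) := by
    have : Tendsto (fun s : ℝ => √s) (𝓝[>] (0:ℝ)) (𝓝 0) := by
      have := (Real.continuous_sqrt.tendsto 0).mono_left (nhdsWithin_le_nhds (s := Set.Ioi 0))
      simpa using this
    simpa using this.add_const (∫ x in Set.Ioi 0, phi x)
  refine tendsto_of_tendsto_of_tendsto_of_le_of_le' h1 h2 ?_ ?_
  · filter_upwards [self_mem_nhdsWithin] with s hs using (main_sum_bounds hs).1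
  · filter_upwards [self_mem_nhdsWithin] with s hs using (main_sum_bounds hs).2

lemma dd_hasSum_exp {s : ℝ} (hs : 0 < s) : HasSum (fun n : ℕ => dd n * Real.exp (-((n:ℝ)*s)))
    ((∑' k : ℕ, Real.exp (-s)^(k+1) * Real.exp (Lg k (Real.exp (-s)))) / 2) := by
  have h := (dd_hasSum (Real.exp_pos (-s)) (by simpa using hs)).2
  have e : ∀ n : ℕ, Real.exp (-s)^n = Real.exp (-((n:ℝ)*s)) := by
    intro n; rw [← Real.exp_nat_mul]; ring_nf
  simpa only [e] using h

lemma sum_q_lim : Tendsto (fun N : ℕ => ∑ k ∈ Finset.range N, q k N) atTop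
    (𝓝 ((∫ x in Set.Ioi 0, phi x) / 2)) := by
  have h := karamata (d := dd) (L := (∫ x in Set.Ioi 0, phi x) / 2) dd_nonneg
    (fun s hs => (dd_hasSum_exp hs).summable) ?_
  · refine h.congr' ?_
    filter_upwards [eventually_gt_atTop 0] with N hN
    rw [dd_sum]
    have : (N:ℝ) ≠ 0 := by positivity
    field_simp
  · refine (main_sum_lim.div_const 2).congr' ?_
    filter_upwards [self_mem_nhdsWithin] with s hs
    rw [(dd_hasSum_exp hs).tsum_eq]
    ring

lemma final_lim : Filter.Tendsto (fun n : ℕ => ExT n / Real.sqrt n) Filter.atTop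
      (nhds (Real.sqrt Real.pi / 2 * ∫ x in Set.Ioi (0 : ℝ), Real.exp (Efun x / 2 - x))) := by
  have h := sum_q_lim.mul u_lim
  have e : (∫ x in Set.Ioi 0, phi x) / 2 * √Real.pi =
      Real.sqrt Real.pi / 2 * ∫ x in Set.Ioi (0 : ℝ), Real.exp (Efun x / 2 - x) := by
    unfold phi; ring
  rw [e] at h
  refine h.congr' ?_
  filter_upwards [eventually_gt_atTop 0] with n hn
  rw [ExT_eq hn]
  rw [div_div, mul_one_div]
end Cyc

/-- `Ex[T_n] ∼ (√π/2) (∫_0^∞ e^{E(x)/2 − x} dx) · √n` as `n → ∞`: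
the expected length of the shortest cycle of a random `n`-cyclation, divided by `√n`,
tends to `(√π/2) ∫_0^∞ e^{E(x)/2 − x} dx`. -/
theorem expected_shortest_cycle_asymptotic :
    Filter.Tendsto (fun n : ℕ => ExT n / Real.sqrt n) Filter.atTop
      (nhds (Real.sqrt Real.pi / 2 * ∫ x in Set.Ioi (0 : ℝ), Real.exp (Efun x / 2 - x))) := by
  exact Cyc.final_lim
end

section
/- For every n ≥ 1, the expected lengths of the longest cycle of random n- and (n+1)-cyclations satisfy (2n+1)·Ex[M_{n+1}] ≥ (2n+3)·Ex[M_n]; in particular the sequence (1/4^n)·binom(2n,n)·Ex[M_n] is nondecreasing in n. -/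
namespace CycProof

def eq2 (n : ℕ) : Fin (2 * n) ⊕ Fin 2 ≃ Fin (2 * (n + 1)) := finSumFinEquiv

def L {n : ℕ} (y : Fin (2 * n)) : Fin (2 * (n + 1)) := eq2 n (Sum.inl y)
def aa (n : ℕ) : Fin (2 * (n + 1)) := eq2 n (Sum.inr 0)
def bb (n : ℕ) : Fin (2 * (n + 1)) := eq2 n (Sum.inr 1)

lemma L_inj {n : ℕ} : Function.Injective (L (n := n)) := fun x y h => by
  simpa [L] using h
lemma L_ne_a {n : ℕ} (y : Fin (2 * n)) : L y ≠ aa n := by simp [L, aa]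
lemma L_ne_b {n : ℕ} (y : Fin (2 * n)) : L y ≠ bb n := by simp [L, bb]
lemma a_ne_b (n : ℕ) : aa n ≠ bb n := by simp [aa, bb]
lemma cases3 {n : ℕ} (x : Fin (2 * (n + 1))) : (∃ y, x = L y) ∨ x = aa n ∨ x = bb n := by
  obtain ⟨z, rfl⟩ := (eq2 n).surjective x
  rcases z with y | i
  · exact Or.inl ⟨y, rfl⟩
  · fin_cases i
    · exact Or.inr (Or.inl rfl)
    · exact Or.inr (Or.inr rfl)

lemma L_val {n : ℕ} (y : Fin (2 * n)) : (L y).val = y.val := rfl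
lemma a_val (n : ℕ) : (aa n).val = 2 * n := rfl
lemma b_val (n : ℕ) : (bb n).val = 2 * n + 1 := rfl
lemma I_val {n : ℕ} (y : Fin (2 * n)) :
    (intervalPerm n y).val = if y.val % 2 = 0 then y.val + 1 else y.val - 1 := rfl

lemma I_L {n : ℕ} (y : Fin (2 * n)) : intervalPerm (n + 1) (L y) = L (intervalPerm n y) := by
  ext
  rw [I_val, L_val, L_val, I_val]
lemma I_a (n : ℕ) : intervalPerm (n + 1) (aa n) = bb n := by
  ext
  rw [I_val, a_val, b_val]
  split_ifs <;> omega
lemma I_b (n : ℕ) : intervalPerm (n + 1) (bb n) = aa n := by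
  ext
  rw [I_val, a_val, b_val]
  split_ifs <;> omega

def extP {n : ℕ} (c : Equiv.Perm (Fin (2 * n))) : Equiv.Perm (Fin (2 * (n + 1))) :=
  (eq2 n).permCongr (Equiv.Perm.sumCongr c (Equiv.swap 0 1))

lemma ext_L {n : ℕ} (c : Equiv.Perm (Fin (2 * n))) (y) : extP c (L y) = L (c y) := by
  simp [extP, L, Equiv.permCongr_apply]
lemma ext_a {n : ℕ} (c : Equiv.Perm (Fin (2 * n))) : extP c (aa n) = bb n := by
  simp [extP, aa, bb, Equiv.permCongr_apply]
lemma ext_b {n : ℕ} (c : Equiv.Perm (Fin (2 * n))) : extP c (bb n) = aa n := by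
  simp [extP, aa, bb, Equiv.permCongr_apply]

def dd {n : ℕ} : Option (Fin (2 * n)) → Fin (2 * (n + 1))
  | none => bb n
  | some p => L p

lemma dd_ne_a {n : ℕ} (q : Option (Fin (2 * n))) : dd q ≠ aa n := by
  cases q
  · exact (a_ne_b n).symm
  · exact L_ne_a _

lemma dd_inj {n : ℕ} : Function.Injective (dd (n := n)) := by
  intro q r h
  cases q <;> cases r
  · rfl
  · exact absurd h.symm (L_ne_b _)
  · exact absurd h (L_ne_b _)
  · exact congrArg some (L_inj h)

def insP {n : ℕ} (c : Equiv.Perm (Fin (2 * n))) (q : Option (Fin (2 * n))) :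
    Equiv.Perm (Fin (2 * (n + 1))) :=
  Equiv.swap (dd q) (bb n) * extP c * Equiv.swap (dd q) (bb n)

lemma invol {m : ℕ} (c : Cyclation m) (x) : c.1 (c.1 x) = x := by
  have := congrArg (fun f => f x) c.2.2
  simpa using this

lemma I_invol (m : ℕ) (x) : intervalPerm m (intervalPerm m x) = x :=
  (intervalPerm m).left_inv x

lemma ext_fpf {n : ℕ} (c : Cyclation n) (x) : extP c.1 x ≠ x := by
  rcases cases3 x with ⟨y, rfl⟩ | rfl | rfl
  · rw [ext_L]; exact fun h => c.2.1 y (L_inj h)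
  · rw [ext_a]; exact (a_ne_b n).symm
  · rw [ext_b]; exact a_ne_b n

lemma ext_invol {n : ℕ} (c : Cyclation n) (x) : extP c.1 (extP c.1 x) = x := by
  rcases cases3 x with ⟨y, rfl⟩ | rfl | rfl
  · rw [ext_L, ext_L, invol]
  · rw [ext_a, ext_b]
  · rw [ext_b, ext_a]

def ins {n : ℕ} (c : Cyclation n) (q : Option (Fin (2 * n))) : Cyclation (n + 1) :=
  ⟨insP c.1 q, by
    refine ⟨fun x h => ?_, ?_⟩
    · apply ext_fpf c (Equiv.swap (dd q) (bb n) x)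
      have := congrArg (Equiv.swap (dd q) (bb n)) h
      simpa [insP] using this
    · ext x
      simp [insP, ext_invol]⟩

lemma ins_a {n : ℕ} (c : Cyclation n) (q) : (ins c q).1 (aa n) = dd q := by
  simp [ins, insP, Equiv.swap_apply_of_ne_of_ne (dd_ne_a q).symm (a_ne_b n), ext_a]

lemma ins_inj {n : ℕ} : Function.Injective
    (fun z : Cyclation n × Option (Fin (2 * n)) => ins z.1 z.2) := by
  rintro ⟨c, q⟩ ⟨c', q'⟩ h
  simp only at h
  have hq : q = q' := by
    apply dd_inj
    rw [← ins_a c, ← ins_a c', h]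
  subst hq
  have h1 : extP c.1 = extP c'.1 := by
    have := congrArg Subtype.val h
    simpa [ins, insP] using this
  have : c = c' := by
    apply Subtype.ext
    ext y
    have := congrArg (fun f => f (L y)) h1
    simp only [ext_L] at this
    rw [L_inj this]
  rw [this]

lemma restrict {n : ℕ} (f : Equiv.Perm (Fin (2 * (n + 1)))) (hf : ∀ x, f x ≠ x)
    (hi : ∀ x, f (f x) = x) (ha : f (aa n) = bb n) : ∃ c : Cyclation n, extP c.1 = f := by
  have hb : f (bb n) = aa n := by rw [← ha, hi]
  have h : ∀ y : Fin (2 * n), ∃ z, f (L y) = L z := by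
    intro y
    rcases cases3 (f (L y)) with h | h | h
    · exact h
    · exact absurd (f.injective (h.trans hb.symm)) (L_ne_b y)
    · exact absurd (f.injective (h.trans ha.symm)) (L_ne_a y)
  choose g hg using h
  have gi : Function.Involutive g := fun y => by
    apply L_inj
    rw [← hg, ← hg, hi]
  refine ⟨⟨gi.toPerm, fun y h => hf (L y) ?_, ?_⟩, ?_⟩
  · rw [hg]; exact congrArg L h
  · ext y; simp [gi y]
  · ext x
    rcases cases3 x with ⟨y, rfl⟩ | rfl | rfl
    · rw [ext_L, hg]; rfl
    · rw [ext_a, ha]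
    · rw [ext_b, hb]

lemma ins_surj {n : ℕ} : Function.Surjective
    (fun z : Cyclation n × Option (Fin (2 * n)) => ins z.1 z.2) := by
  intro f
  obtain ⟨q, hq⟩ : ∃ q, dd q = f.1 (aa n) := by
    rcases cases3 (f.1 (aa n)) with ⟨y, h⟩ | h | h
    · exact ⟨some y, h.symm⟩
    · exact absurd h (f.2.1 _)
    · exact ⟨none, h.symm⟩
  obtain ⟨c, hc⟩ := restrict (Equiv.swap (dd q) (bb n) * f.1 * Equiv.swap (dd q) (bb n))
    (fun x h => f.2.1 (Equiv.swap (dd q) (bb n) x) (by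
      have := congrArg (Equiv.swap (dd q) (bb n)) h
      simpa using this))
    (fun x => by simp [invol])
    (by simp [Equiv.swap_apply_of_ne_of_ne (dd_ne_a q).symm (a_ne_b n), ← hq])
  refine ⟨(c, q), Subtype.ext ?_⟩
  simp only [ins, insP, hc]
  ext x
  simp

noncomputable def insEquiv (n : ℕ) : Cyclation n × Option (Fin (2 * n)) ≃ Cyclation (n + 1) :=
  Equiv.ofBijective _ ⟨ins_inj, ins_surj⟩

lemma orbit_sub {m : ℕ} (c : Cyclation m) (S : Set (Fin (2 * m))) (x) (hx : x ∈ S)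
    (h1 : ∀ y ∈ S, c.1 y ∈ S) (h2 : ∀ y ∈ S, intervalPerm m y ∈ S) :
    MulAction.orbit (cycGroup c) x ⊆ S := by
  rintro _ ⟨⟨g, hg⟩, rfl⟩
  have key : ∀ y, g y ∈ S ↔ y ∈ S := by
    unfold cycGroup at hg
    induction hg using Subgroup.closure_induction with
    | mem g hg =>
      rcases hg with rfl | rfl
      · exact fun y => ⟨fun h => by simpa [invol] using h1 _ h, h1 y⟩
      · exact fun y => ⟨fun h => by simpa [I_invol] using h2 _ h, h2 y⟩
    | one => simp
    | mul g h _ _ ig ih => intro y; rw [Equiv.Perm.mul_apply, ig, ih]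
    | inv g _ ig => intro y; rw [← ig]; simp
  exact (key x).2 hx

lemma orbit_c {m : ℕ} (c : Cyclation m) {x y}
    (h : y ∈ MulAction.orbit (cycGroup c) x) : c.1 y ∈ MulAction.orbit (cycGroup c) x :=
  (MulAction.mem_orbit_of_mem_orbit
    (⟨c.1, Subgroup.subset_closure (by simp)⟩ : cycGroup c) h :)

lemma orbit_I {m : ℕ} (c : Cyclation m) {x y}
    (h : y ∈ MulAction.orbit (cycGroup c) x) :
    intervalPerm m y ∈ MulAction.orbit (cycGroup c) x :=
  (MulAction.mem_orbit_of_mem_orbit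
    (⟨intervalPerm m, Subgroup.subset_closure (by simp)⟩ : cycGroup c) h :)

lemma ins_b {n : ℕ} (c : Cyclation n) (p) : (ins c (some p)).1 (bb n) = L (c.1 p) := by
  have : L (c.1 p) ≠ L p := fun h => c.2.1 p (L_inj h)
  simp [ins, insP, dd, ext_L, Equiv.swap_apply_of_ne_of_ne this (L_ne_b _)]

lemma ins_L {n : ℕ} (c : Cyclation n) (q) (y) (h : L y ≠ dd q) (h' : L (c.1 y) ≠ dd q) :
    (ins c q).1 (L y) = L (c.1 y) := by
  simp [ins, insP, ext_L, Equiv.swap_apply_of_ne_of_ne h (L_ne_b _),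
    Equiv.swap_apply_of_ne_of_ne h' (L_ne_b _)]

lemma orbit_L {n : ℕ} (c : Cyclation n) (q) (x : Fin (2 * n)) :
    L '' MulAction.orbit (cycGroup c) x ⊆ MulAction.orbit (cycGroup (ins c q)) (L x) := by
  rw [Set.image_subset_iff]
  apply orbit_sub c
  · exact MulAction.mem_orbit_self _
  · intro y hy
    simp only [Set.mem_preimage] at hy ⊢
    cases q with
    | none =>
      rw [← ins_L c none y (L_ne_b _) (L_ne_b _)]
      exact orbit_c _ hy
    | some p =>
      by_cases h : y = p
      · subst h
        rw [← ins_b, ← I_a]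
        apply orbit_c
        apply orbit_I
        rw [← invol (ins c (some y)) (aa n), ins_a]
        exact orbit_c _ hy
      · by_cases h' : c.1 y = p
        · subst h'
          have e := ins_b c (c.1 y)
          rw [invol] at e
          rw [← e] at hy
          have h3 := orbit_c _ hy
          rw [invol] at h3
          have h4 := orbit_c _ (orbit_I _ h3)
          rwa [I_b, ins_a] at h4
        · rw [← ins_L c (some p) y (fun e => h (L_inj e)) (fun e => h' (L_inj e))]
          exact orbit_c _ hy
  · intro y hy
    simp only [Set.mem_preimage] at hy ⊢
    rw [← I_L]
    exact orbit_I _ hy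

lemma ncard_le {n : ℕ} (c : Cyclation n) (q) (x : Fin (2 * n)) :
    (MulAction.orbit (cycGroup c) x).ncard ≤
      (MulAction.orbit (cycGroup (ins c q)) (L x)).ncard := by
  rw [← Set.ncard_image_of_injective _ L_inj]
  exact Set.ncard_le_ncard (orbit_L c q x) (Set.toFinite _)

lemma ncard_le' {n : ℕ} (c : Cyclation n) (p) (x) (hp : p ∈ MulAction.orbit (cycGroup c) x) :
    (MulAction.orbit (cycGroup c) x).ncard + 2 ≤
      (MulAction.orbit (cycGroup (ins c (some p))) (L x)).ncard := by
  have h1 := orbit_L c (some p) x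
  have h2 := orbit_c _ (h1 ⟨p, hp, rfl⟩)
  have e : (ins c (some p)).1 (L p) = aa n := by
    have := ins_a c (some p)
    change _ = L p at this
    rw [← this, invol]
  rw [e] at h2
  have h3 := orbit_I _ h2
  rw [I_a] at h3
  have hs : insert (aa n) (insert (bb n) (L '' MulAction.orbit (cycGroup c) x)) ⊆
      MulAction.orbit (cycGroup (ins c (some p))) (L x) :=
    Set.insert_subset h2 (Set.insert_subset h3 h1)
  refine le_trans (le_of_eq ?_) (Set.ncard_le_ncard hs (Set.toFinite _))
  rw [Set.ncard_insert_of_notMem _ (Set.toFinite _), Set.ncard_insert_of_notMem _ (Set.toFinite _),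
    Set.ncard_image_of_injective _ L_inj]
  · rintro ⟨y, -, h⟩; exact L_ne_b y h
  · rintro (h | ⟨y, -, h⟩)
    · exact a_ne_b n h
    · exact L_ne_a y h

lemma le_longest {m : ℕ} (c : Cyclation m) (x : Fin (2 * m)) :
    (MulAction.orbit (cycGroup c) x).ncard / 2 ≤ longestCycle c := by
  apply Nat.div_le_div_right
  exact Finset.le_sup (f := fun x : Fin (2 * m) => (MulAction.orbit (cycGroup c) x).ncard)
    (Finset.mem_univ x)

lemma main_c {n : ℕ} (hn : 1 ≤ n) (c : Cyclation n) :
    (2 * n + 3) * longestCycle c ≤ ∑ q, longestCycle (ins c q) := by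
  classical
  have : Nonempty (Fin (2 * n)) := ⟨⟨0, by omega⟩⟩
  obtain ⟨x, -, hx⟩ := Finset.exists_mem_eq_sup (Finset.univ : Finset (Fin (2 * n)))
    Finset.univ_nonempty (fun x => (MulAction.orbit (cycGroup c) x).ncard)
  have hM : longestCycle c = (MulAction.orbit (cycGroup c) x).ncard / 2 := by
    unfold longestCycle; rw [hx]
  have h0 : ∀ q, longestCycle c ≤ longestCycle (ins c q) := fun q => by
    rw [hM]
    exact (Nat.div_le_div_right (ncard_le c q x)).trans (le_longest _ _)
  have h1 : ∀ p, longestCycle c + (if p ∈ MulAction.orbit (cycGroup c) x then 1 else 0)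
      ≤ longestCycle (ins c (some p)) := fun p => by
    split_ifs with h
    · have h2 := ncard_le' c p x h
      have h3 := le_longest (ins c (some p)) (L x)
      omega
    · exact h0 _
  rw [Fintype.sum_option]
  have h2 := Finset.sum_le_sum (fun p (_ : p ∈ Finset.univ) => h1 p)
  have hc : (∑ p, if p ∈ MulAction.orbit (cycGroup c) x then 1 else 0)
      = (MulAction.orbit (cycGroup c) x).ncard := by
    rw [Finset.sum_boole, Set.ncard_eq_toFinset_card']
    simp only [Nat.cast_id]
    congr 1
    ext p
    simp
  rw [Finset.sum_add_distrib, hc, Finset.sum_const, Finset.card_univ, Fintype.card_fin,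
    smul_eq_mul] at h2
  have h3 := h0 none
  have h4 : 2 * longestCycle c ≤ (MulAction.orbit (cycGroup c) x).ncard := by omega
  nlinarith

lemma card_succ (n : ℕ) :
    Fintype.card (Cyclation (n + 1)) = (2 * n + 1) * Fintype.card (Cyclation n) := by
  rw [← Fintype.card_congr (insEquiv n), Fintype.card_prod, Fintype.card_option, Fintype.card_fin,
    mul_comm]

lemma card_pos (n : ℕ) : 0 < Fintype.card (Cyclation n) := by
  induction n with
  | zero =>
    exact Fintype.card_pos_iff.2 ⟨⟨1, fun x => x.elim0, one_mul _⟩⟩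
  | succ n ih => rw [card_succ]; positivity

lemma main_sum {n : ℕ} (hn : 1 ≤ n) :
    (2 * n + 3) * ∑ c : Cyclation n, longestCycle c ≤ ∑ c : Cyclation (n + 1), longestCycle c := by
  rw [← (insEquiv n).sum_comp, Fintype.sum_prod_type, Finset.mul_sum]
  exact Finset.sum_le_sum fun c _ => main_c hn c

lemma part1 {n : ℕ} (hn : 1 ≤ n) :
    (2 * (n : ℝ) + 3) * ExM n ≤ (2 * (n : ℝ) + 1) * ExM (n + 1) := by
  have h : ((2 * n + 3 : ℕ) : ℝ) * ((∑ c : Cyclation n, longestCycle c : ℕ) : ℝ)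
      ≤ ((∑ c : Cyclation (n + 1), longestCycle c : ℕ) : ℝ) := by exact_mod_cast main_sum hn
  have hp : (0 : ℝ) < Fintype.card (Cyclation n) := by exact_mod_cast card_pos n
  push_cast at h
  unfold ExM
  rw [card_succ]
  push_cast
  have e : (2 * (n : ℝ) + 1) * ((∑ c : Cyclation (n + 1), (longestCycle c : ℝ)) /
      ((2 * (n : ℝ) + 1) * Fintype.card (Cyclation n)))
      = (∑ c : Cyclation (n + 1), (longestCycle c : ℝ)) / Fintype.card (Cyclation n) := by
    have : (2 * (n : ℝ) + 1) ≠ 0 := by positivity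
    field_simp
  rw [e, ← mul_div_assoc]
  gcongr

lemma ExM_nonneg (n : ℕ) : 0 ≤ ExM n := by unfold ExM; positivity

lemma part2 {n : ℕ} (hn : 1 ≤ n) :
    (1 / 4 ^ n : ℝ) * Nat.choose (2 * n) n * ExM n
      ≤ (1 / 4 ^ (n + 1) : ℝ) * Nat.choose (2 * (n + 1)) (n + 1) * ExM (n + 1) := by
  have h := part1 hn
  have h0 := ExM_nonneg n
  have hb := Nat.succ_mul_centralBinom_succ n
  rw [Nat.centralBinom_eq_two_mul_choose, Nat.centralBinom_eq_two_mul_choose] at hb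
  have hb' : ((n : ℝ) + 1) * (Nat.choose (2 * (n + 1)) (n + 1) : ℝ)
      = 2 * (2 * n + 1) * (Nat.choose (2 * n) n : ℝ) := by exact_mod_cast hb
  have e : (Nat.choose (2 * (n + 1)) (n + 1) : ℝ)
      = 2 * (2 * n + 1) * (Nat.choose (2 * n) n : ℝ) / (n + 1) := by
    rw [eq_div_iff (by positivity), ← hb']; ring
  have h5 : ExM n ≤ (2 * (n : ℝ) + 1) * ExM (n + 1) / (2 * n + 2) := by
    rw [le_div_iff₀ (by positivity)]; nlinarith
  have e2 : (1 / 4 ^ (n + 1) : ℝ) * Nat.choose (2 * (n + 1)) (n + 1) * ExM (n + 1)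
      = (1 / 4 ^ n : ℝ) * Nat.choose (2 * n) n * ((2 * (n : ℝ) + 1) * ExM (n + 1) / (2 * n + 2)) := by
    rw [e, pow_succ]
    field_simp
    ring
  rw [e2]
  gcongr

end CycProof

/-- For every `n ≥ 1`, `(2n+1)·Ex[M_{n+1}] ≥ (2n+3)·Ex[M_n]`; in particular the sequence
`(1/4^n)·binom(2n,n)·Ex[M_n]` is nondecreasing in `n`. -/
theorem expected_longest_cycle_monotone (n : ℕ) (hn : 1 ≤ n) :
    (2 * (n : ℝ) + 3) * ExM n ≤ (2 * (n : ℝ) + 1) * ExM (n + 1) ∧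
    (1 / 4 ^ n : ℝ) * Nat.choose (2 * n) n * ExM n
      ≤ (1 / 4 ^ (n + 1) : ℝ) * Nat.choose (2 * (n + 1)) (n + 1) * ExM (n + 1) := by
  exact ⟨CycProof.part1 hn, CycProof.part2 hn⟩
end

section
/- For every n ≥ 1, the expected lengths of the shortest cycle of random n- and (n+1)-cyclations satisfy (2n+2)·Ex[T_n] ≤ (2n+1)·Ex[T_{n+1}]; equivalently the sequence (1/4^n)·binom(2n,n)·Ex[T_n] is nondecreasing in n. -/
section
open Finset

noncomputable def zD : Derivation ℝ (MvPolynomial ℕ ℝ) (MvPolynomial ℕ ℝ) :=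
  MvPolynomial.mkDerivation ℝ fun k => (k : MvPolynomial ℕ ℝ) * MvPolynomial.X (k+2)

lemma zD_X (k : ℕ) : zD (MvPolynomial.X k) = (k : MvPolynomial ℕ ℝ) * MvPolynomial.X (k+2) := by
  simp [zD, MvPolynomial.mkDerivation_X]

lemma zD_prod {Q : Type*} [DecidableEq Q] (s : Finset Q) (k : Q → ℕ) :
    zD (∏ q ∈ s, MvPolynomial.X (k q)) =
      ∑ q ∈ s, (k q : MvPolynomial ℕ ℝ) *
        ∏ r ∈ s, MvPolynomial.X (k r + if r = q then 2 else 0) := by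
  induction s using Finset.induction_on with
  | empty => simp
  | insert a s ha ih =>
    rw [prod_insert ha, Derivation.leibniz, ih, sum_insert ha, prod_insert ha, zD_X]
    have e1 : ∏ r ∈ s, (MvPolynomial.X (k r + if r = a then 2 else 0) : MvPolynomial ℕ ℝ) =
        ∏ r ∈ s, MvPolynomial.X (k r) := by
      apply prod_congr rfl
      intro r hr
      rw [if_neg (by rintro rfl; exact ha hr)]; rfl
    rw [e1, if_pos rfl, smul_eq_mul, smul_eq_mul, mul_sum, add_comm]
    congr 1
    · ring
    · apply sum_congr rfl
      intro q hq
      rw [prod_insert ha, if_neg (by rintro rfl; exact ha hq)]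
      simp only [add_zero]; ring

noncomputable def zp : ℕ → MvPolynomial ℕ ℝ
  | 0 => 1
  | n+1 => MvPolynomial.C (1 / (2 * ((n:ℝ)+1))) * (MvPolynomial.X 2 * zp n + zD (zp n))

lemma zp_succ (n : ℕ) : (2 * ((n : MvPolynomial ℕ ℝ)+1)) * zp (n+1) =
    MvPolynomial.X 2 * zp n + zD (zp n) := by
  rw [zp, ← mul_assoc]
  have : (2 * ((n : MvPolynomial ℕ ℝ)+1)) = MvPolynomial.C (2 * ((n:ℝ)+1)) := by
    rw [map_mul, map_add, map_natCast, map_one, map_ofNat]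
  rw [this, ← map_mul, mul_one_div_cancel (by positivity)]; simp

lemma zp_rec (n : ℕ) : (2 * (n : MvPolynomial ℕ ℝ)) * zp n =
    ∑ j ∈ range n, MvPolynomial.X (2 * (n - j)) * zp j := by
  induction n with
  | zero => simp
  | succ n ih =>
    rcases Nat.eq_zero_or_pos n with rfl | hn
    · simpa [zp] using zp_succ 0
    have hne : (2 * (n : MvPolynomial ℕ ℝ)) ≠ 0 := by
      have : (n : MvPolynomial ℕ ℝ) ≠ 0 := by exact_mod_cast hn.ne'
      exact mul_ne_zero two_ne_zero this
    apply mul_left_cancel₀ hne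
    have hs := zp_succ n
    have hD : (2 * (n : MvPolynomial ℕ ℝ)) * zD (zp n) =
        ∑ j ∈ range n, zD (MvPolynomial.X (2 * (n - j)) * zp j) := by
      have := congrArg zD ih
      rw [map_sum, Derivation.leibniz] at this
      rw [← this]
      have : zD (2 * (n : MvPolynomial ℕ ℝ)) = 0 := by
        have : (2 * (n : MvPolynomial ℕ ℝ)) = ((2 * n : ℕ) : MvPolynomial ℕ ℝ) := by push_cast; ring
        rw [this, Derivation.map_natCast]
      rw [this]; simp
    have h1 : (2 * (n : MvPolynomial ℕ ℝ)) * (2 * ((n+1 : ℕ) : MvPolynomial ℕ ℝ) * zp (n+1)) =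
        ∑ j ∈ range n, (MvPolynomial.X (2 * (n - j)) * ((2 * ((j : MvPolynomial ℕ ℝ)+1)) * zp (j+1))
          + ((2 * (n - j) : ℕ) : MvPolynomial ℕ ℝ) * MvPolynomial.X (2 * (n + 1 - j)) * zp j) := by
      rw [Nat.cast_add, Nat.cast_one, hs, mul_add, hD, mul_left_comm, ih, mul_sum, ← sum_add_distrib]
      apply sum_congr rfl
      intro j hj
      have hj := mem_range.1 hj
      rw [zp_succ, Derivation.leibniz, zD_X, show 2 * (n-j) + 2 = 2 * (n + 1 - j) by omega]
      simp only [smul_eq_mul]; ring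
    rw [h1, sum_add_distrib]
    have e1 : ∑ j ∈ range n, MvPolynomial.X (2 * (n - j)) * ((2 * ((j : MvPolynomial ℕ ℝ)+1)) * zp (j+1))
        = ∑ j ∈ range (n+1), (2 * j : MvPolynomial ℕ ℝ) * (MvPolynomial.X (2 * (n + 1 - j)) * zp j) := by
      rw [sum_range_succ']
      simp only [Nat.cast_zero, mul_zero, zero_mul, add_zero]
      apply sum_congr rfl
      intro j hj
      rw [show n + 1 - (j+1) = n - j by omega]; push_cast; ring
    have e2 : ∑ j ∈ range n, ((2 * (n - j) : ℕ) : MvPolynomial ℕ ℝ) * MvPolynomial.X (2 * (n + 1 - j)) * zp j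
        = ∑ j ∈ range (n+1), ((2 * n : MvPolynomial ℕ ℝ) - 2 * (j : MvPolynomial ℕ ℝ)) * (MvPolynomial.X (2 * (n + 1 - j)) * zp j) := by
      rw [sum_range_succ]
      rw [sub_self, zero_mul, add_zero]
      apply sum_congr rfl
      intro j hj
      have hj := mem_range.1 hj
      rw [Nat.cast_mul, Nat.cast_sub hj.le]; push_cast; ring
    rw [e1, e2, ← sum_add_distrib, mul_sum]
    apply sum_congr rfl
    intro j _
    ring

noncomputable def uu (n l : ℕ) : ℝ := MvPolynomial.eval (fun k => if l ≤ k / 2 then 1 else 0) (zp n)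

lemma uu_rec (n l : ℕ) (hl : 1 ≤ l) : 2 * (n:ℝ) * uu n l = ∑ j ∈ range (n + 1 - l), uu j l := by
  have := congrArg (MvPolynomial.eval (fun k => if l ≤ k / 2 then (1:ℝ) else 0)) (zp_rec n)
  rw [map_mul, map_sum] at this
  simp only [map_mul, MvPolynomial.eval_X, map_natCast, map_ofNat] at this
  change 2 * (n:ℝ) * uu n l = ∑ j ∈ range n, _ * uu j l at this
  rw [this]
  have e : range (n+1-l) = (range n).filter (fun j => l ≤ 2 * (n-j)/2) := by
    ext j; simp only [mem_range, mem_filter]; omega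
  rw [e, sum_filter]
  apply sum_congr rfl
  intro j _
  split_ifs <;> simp

lemma uu_zero' (n : ℕ) : uu n 0 = uu n 1 := by
  induction n using Nat.strong_induction_on with
  | _ n ih =>
    rcases Nat.eq_zero_or_pos n with rfl | hn
    · simp [uu, zp]
    have h0 := congrArg (MvPolynomial.eval (fun k => if 0 ≤ k / 2 then (1:ℝ) else 0)) (zp_rec n)
    rw [map_mul, map_sum] at h0
    simp only [map_mul, MvPolynomial.eval_X, map_natCast, map_ofNat] at h0
    change 2 * (n:ℝ) * uu n 0 = ∑ j ∈ range n, _ * uu j 0 at h0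
    have h1 := uu_rec n 1 le_rfl
    have : 2 * (n:ℝ) * uu n 0 = 2 * n * uu n 1 := by
      rw [h0, h1]
      apply sum_congr (by simp)
      intro j hj
      rw [ih j (by have := mem_range.1 hj; omega)]; simp
    exact mul_left_cancel₀ (by positivity) this

/-- recurrence facts -/
structure URec (u : ℕ → ℕ → ℝ) : Prop where
  zero : ∀ l, u 0 l = 1
  rec' : ∀ n l : ℕ, 1 ≤ l → 2 * (n:ℝ) * u n l = ∑ j ∈ range (n + 1 - l), u j l

namespace URec
variable {u : ℕ → ℕ → ℝ}

lemma nonneg (h : URec u) (n l : ℕ) (hl : 1 ≤ l) : 0 ≤ u n l := by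
  induction n using Nat.strong_induction_on with
  | _ n ih =>
    rcases Nat.eq_zero_or_pos n with rfl | hn
    · rw [h.zero]; norm_num
    · have h1 := h.rec' n l hl
      have h2 : 0 ≤ ∑ j ∈ range (n + 1 - l), u j l :=
        sum_nonneg fun j hj => ih j (by have := mem_range.1 hj; omega)
      rw [← h1] at h2
      have : (0:ℝ) < 2 * n := by positivity
      exact nonneg_of_mul_nonneg_right h2 this

lemma le_one (h : URec u) (n l : ℕ) (hl : 1 ≤ l) : u n l ≤ u n 1 := by
  induction n using Nat.strong_induction_on with
  | _ n ih =>
    rcases Nat.eq_zero_or_pos n with rfl | hn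
    · rw [h.zero, h.zero]
    · have h1 := h.rec' n l hl
      have h3 := h.rec' n 1 le_rfl
      have h2 : ∑ j ∈ range (n + 1 - l), u j l ≤ ∑ j ∈ range (n + 1 - 1), u j 1 := by
        calc _ ≤ ∑ j ∈ range (n + 1 - l), u j 1 :=
              sum_le_sum fun j hj => ih j (by have := mem_range.1 hj; omega)
          _ ≤ _ := by
              apply sum_le_sum_of_subset_of_nonneg
              · intro j; simp only [mem_range]; omega
              · intro j _ _; exact h.nonneg j 1 le_rfl
      rw [← h1, ← h3] at h2
      have : (0:ℝ) < 2 * n := by positivity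
      exact le_of_mul_le_mul_left h2 this

lemma eq_zero (h : URec u) (n l : ℕ) (hn : 1 ≤ n) (hl : n < l) : u n l = 0 := by
  have h1 := h.rec' n l (by omega)
  rw [show n + 1 - l = 0 by omega] at h1
  have : (0:ℝ) < n := by positivity
  simp at h1
  rcases h1 with h1 | h1
  · omega
  · exact h1

lemma step (h : URec u) (n l : ℕ) (hl : 1 ≤ l) :
    2 * ((n:ℝ) + 1) * u (n+1) l = 2 * n * u n l + if l ≤ n + 1 then u (n + 1 - l) l else 0 := by
  have h1 := h.rec' n l hl
  have h2 := h.rec' (n+1) l hl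
  push_cast at h2
  rw [h1, h2]
  split_ifs with hc
  · rw [show n + 1 + 1 - l = (n + 1 - l) + 1 by omega, sum_range_succ]
  · rw [show n + 1 + 1 - l = 0 by omega, show n + 1 - l = 0 by omega]; simp

lemma step_one (h : URec u) (n : ℕ) :
    2 * ((n:ℝ) + 1) * u (n+1) 1 = (2 * n + 1) * u n 1 := by
  rw [h.step n 1 le_rfl]; simp; ring

lemma pos_one (h : URec u) (n : ℕ) : 0 < u n 1 := by
  induction n with
  | zero => rw [h.zero]; norm_num
  | succ n ih =>
    have := h.step_one n
    have h3 : 0 < (2 * (n:ℝ) + 1) * u n 1 := by positivity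
    rw [← this] at h3
    exact pos_of_mul_pos_right h3 (by positivity)

lemma anti_one (h : URec u) : Antitone (fun n => u n 1) := by
  apply antitone_nat_of_succ_le
  intro n
  have := h.step_one n
  have h2 := h.pos_one n
  have h3 : 2 * ((n:ℝ) + 1) * u (n+1) 1 ≤ 2 * ((n:ℝ) + 1) * u n 1 := by rw [this]; nlinarith
  exact le_of_mul_le_mul_left h3 (by positivity)

lemma sq_mono (h : URec u) : Monotone (fun n : ℕ => (n:ℝ) * u n 1 ^ 2) := by
  apply monotone_nat_of_le_succ
  intro n
  have h1 := h.step_one n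
  have h2 := h.pos_one n
  have h3 : u (n+1) 1 = (2 * n + 1) * u n 1 / (2 * ((n:ℝ) + 1)) := by
    field_simp; linarith
  push_cast
  rw [h3, div_pow, mul_pow, mul_div_assoc', le_div_iff₀ (by positivity)]
  have : (n:ℝ) * 4 * (n+1) ≤ (2*n+1)^2 := by nlinarith
  have h5 : 0 ≤ u n 1 ^ 2 * (n+1) := by positivity
  nlinarith [mul_le_mul_of_nonneg_left this h5]

lemma half (h : URec u) (k n : ℕ) (hk : 1 ≤ k) (hn : n ≤ 2 * k) : 2 * u k 1 ≤ 3 * u n 1 := by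
  have h1 := h.sq_mono (show k ≤ 2 * k by omega)
  have h2 : u (2*k) 1 ≤ u n 1 := h.anti_one hn
  have h3 := h.pos_one k
  have h4 := h.pos_one (2*k)
  simp only [Nat.cast_mul, Nat.cast_ofNat] at h1
  have hk' : (0:ℝ) < k := by positivity
  have h5 : u k 1 ^ 2 ≤ 2 * u (2*k) 1 ^ 2 := by
    have : (k:ℝ) * u k 1 ^ 2 ≤ k * (2 * u (2*k) 1 ^ 2) := by linarith
    exact le_of_mul_le_mul_left this hk'
  have : 2 * u k 1 ≤ 3 * u (2*k) 1 := by
    apply le_of_sq_le_sq _ (by positivity)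
    nlinarith [sq_nonneg (u (2*k) 1)]
  linarith

/-- coefficients of exp(x^l/(2l)) -/
noncomputable def ecoef (l m : ℕ) : ℝ :=
  if l ∣ m then 1 / ((m / l).factorial * (2 * l) ^ (m / l)) else 0

lemma ecoef_zero (l : ℕ) : ecoef l 0 = 1 := by simp [ecoef]

lemma ecoef_lt (l m : ℕ) (h : m + 1 < l) : ecoef l (m+1) = 0 := by
  rw [ecoef, if_neg]
  intro hd; exact absurd (Nat.le_of_dvd (by omega) hd) (by omega)

lemma ecoef_nonneg (l m : ℕ) : 0 ≤ ecoef l m := by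
  rw [ecoef]; split_ifs <;> positivity

lemma ecoef_step (l m : ℕ) (hl : 1 ≤ l) :
    2 * ((m + l : ℕ):ℝ) * ecoef l (m + l) = ecoef l m := by
  unfold ecoef
  by_cases hd : l ∣ m
  · obtain ⟨j, rfl⟩ := hd
    have e1 : l * j + l = l * (j+1) := by ring
    have hl' : (l:ℝ) ≠ 0 := by positivity
    rw [e1, if_pos (dvd_mul_right _ _), if_pos (dvd_mul_right _ _),
      Nat.mul_div_cancel_left _ (by omega), Nat.mul_div_cancel_left _ (by omega),
      Nat.factorial_succ]
    push_cast
    have : ((j:ℝ) + 1) ≠ 0 := by positivity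
    have : (j.factorial:ℝ) ≠ 0 := by positivity
    field_simp
    try ring
  · rw [if_neg hd, if_neg (by simpa using hd)]; simp

open PowerSeries in
lemma exp_mul (h : URec u) (l : ℕ) (hl : 1 ≤ l) :
    (PowerSeries.mk (fun n => u n l)) =
      PowerSeries.mk (ecoef l) * PowerSeries.mk (fun n => u n (l+1)) := by
  set E : PowerSeries ℝ := PowerSeries.mk (ecoef l) with hE
  set G : PowerSeries ℝ := PowerSeries.mk (fun n => u n (l+1)) with hG
  have hdE : d⁄dX ℝ E * 2 = X ^ (l-1) * E := by
    ext m
    rw [show (2 : PowerSeries ℝ) = PowerSeries.C (2:ℝ) from (map_ofNat _ 2).symm, coeff_mul_C, coeff_X_pow_mul',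
      coeff_derivative, hE, coeff_mk]
    split_ifs with hc
    · rw [coeff_mk, ← ecoef_step l (m - (l-1)) hl, show m - (l-1) + l = m + 1 by omega]; push_cast; ring
    · rw [ecoef_lt _ _ (by omega)]; simp
  have hdG : (1 - X) * d⁄dX ℝ G * 2 = X ^ l * G := by
    ext m
    rw [show (2 : PowerSeries ℝ) = PowerSeries.C (2:ℝ) from (map_ofNat _ 2).symm, coeff_mul_C, coeff_X_pow_mul',
      sub_mul, one_mul, map_sub, coeff_derivative, hG, coeff_mk]
    have hs := h.step m (l+1) (by omega)
    have e : coeff m (X * d⁄dX ℝ (PowerSeries.mk fun n => u n (l+1))) = m * u m (l+1) := by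
      cases m with
      | zero => simp
      | succ m => rw [coeff_succ_X_mul, coeff_derivative, coeff_mk]; push_cast; ring
    rw [e]
    by_cases hc : l ≤ m
    · rw [if_pos hc, coeff_mk]; rw [if_pos (by omega), show m + 1 - (l+1) = m - l by omega] at hs
      linarith
    · rw [if_neg hc]; rw [if_neg (by omega)] at hs; linarith
  have hdH : (1 - X) * d⁄dX ℝ (E * G) * 2 = X ^ (l-1) * (E * G) := by
    have : d⁄dX ℝ (E * G) = E * d⁄dX ℝ G + G * d⁄dX ℝ E := by
      rw [Derivation.leibniz]; simp [smul_eq_mul]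
    rw [this]
    have hx : (X : PowerSeries ℝ)^l = X * X^(l-1) := by
      rw [← pow_succ']; congr 1; omega
    rw [hx] at hdG
    linear_combination E * hdG + (1 - X) * G * hdE
  have hrec : ∀ m : ℕ, 2 * ((m:ℝ)+1) * coeff (m+1) (E*G) = 2 * m * coeff m (E*G) +
      if l ≤ m + 1 then coeff (m + 1 - l) (E*G) else 0 := by
    intro m
    have := congrArg (coeff m) hdH
    rw [show (2 : PowerSeries ℝ) = PowerSeries.C (2:ℝ) from (map_ofNat _ 2).symm, coeff_mul_C, coeff_X_pow_mul',
      sub_mul, one_mul, map_sub, coeff_derivative] at this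
    have e : coeff m (X * d⁄dX ℝ (E*G)) = m * coeff m (E*G) := by
      cases m with
      | zero => simp
      | succ m => rw [coeff_succ_X_mul, coeff_derivative]; push_cast; ring
    rw [e] at this
    by_cases hc : l - 1 ≤ m
    · rw [if_pos hc] at this; rw [if_pos (by omega), show m + 1 - l = m - (l-1) by omega]
      linarith
    · rw [if_neg hc] at this; rw [if_neg (by omega)]; linarith
  ext m
  rw [coeff_mk]
  induction m using Nat.strong_induction_on with
  | _ m ih =>
    cases m with
    | zero => rw [h.zero]; simp [hE, hG, ecoef_zero, h.zero]
    | succ m =>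
      have h1 := h.step m l hl
      have h2 := hrec m
      rw [← ih m (by omega)] at h2
      have : 2 * ((m:ℝ)+1) * u (m+1) l = 2 * ((m:ℝ)+1) * coeff (m+1) (E*G) := by
        rw [h1, h2]
        split_ifs with hc
        · rw [ih (m+1-l) (by omega)]
        · rfl
      exact mul_left_cancel₀ (by positivity) this

open PowerSeries in
lemma trapezoid (h : URec u) (n l : ℕ) (hl : 1 ≤ l) (hn : l ≤ n) :
    4 * (l:ℝ) * (u n l - u n (l+1)) ≤ u (n-l) l + u (n-l) (l+1) := by
  have hE := h.exp_mul l hl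
  set E : PowerSeries ℝ := PowerSeries.mk (ecoef l) with hEd
  set G : PowerSeries ℝ := PowerSeries.mk (fun n => u n (l+1)) with hG
  set T : PowerSeries ℝ := X ^ l * (E + 1) - PowerSeries.C (4*(l:ℝ)) * (E - 1) with hT
  have hTnn : ∀ m, 0 ≤ coeff m T := by
    intro m
    rw [hT, map_sub, coeff_X_pow_mul', coeff_C_mul, map_sub, hEd, coeff_mk, map_add, coeff_mk,
      coeff_one, coeff_one]
    by_cases hm : l ≤ m
    · obtain ⟨j, rfl⟩ := Nat.exists_eq_add_of_le' hm
      have hs := ecoef_step l j hl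
      rw [if_pos hm, if_neg (by omega : ¬ j + l = 0), Nat.add_sub_cancel]
      have hnn := ecoef_nonneg l (j+l)
      push_cast at hs
      by_cases hj : j = 0
      · subst hj
        rw [ecoef_zero] at hs ⊢
        simp at hs ⊢; nlinarith
      · rw [if_neg hj]
        by_cases hjl : j < l
        · obtain ⟨i, rfl⟩ := Nat.exists_eq_succ_of_ne_zero hj
          rw [Nat.succ_eq_add_one, ecoef_lt l i hjl] at hs
          have : ecoef l (i + 1 + l) = 0 := by
            rcases mul_eq_zero.1 hs with h | h
            · exfalso; push_cast at h; linarith [(by positivity : (0:ℝ) < 2 * ((i:ℝ) + 1 + l))]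
            · exact h
          rw [Nat.succ_eq_add_one, this, ecoef_lt l i hjl]; simp
        · have : (l:ℝ) ≤ j := by exact_mod_cast not_lt.1 hjl
          rw [← hs]
          nlinarith
    · rw [if_neg hm]
      cases m with
      | zero => simp [ecoef_zero]
      | succ m => rw [ecoef_lt l m (by omega)]; simp
  have key : 0 ≤ coeff n (T * G) := by
    rw [coeff_mul]
    apply sum_nonneg
    intro p _
    apply mul_nonneg (hTnn _)
    rw [hG, coeff_mk]; exact h.nonneg _ _ (by omega)
  have e : T * G = X ^ l * (PowerSeries.mk (fun n => u n l) + G) -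
      PowerSeries.C (4*(l:ℝ)) * (PowerSeries.mk (fun n => u n l) - G) := by
    rw [hE, hT]; ring
  rw [e, map_sub, coeff_X_pow_mul', coeff_C_mul, map_sub, if_pos hn, map_add, hG] at key
  simp only [coeff_mk] at key
  linarith

lemma Wbound (h : URec u) (n k : ℕ) (hk : k + 1 ≤ n) (hk' : k + 2 ≤ n ∨ k = 0) :
    ∑ l ∈ range (k+1), (u (n-(l+1)) (l+1) - u (n-(l+1)) (l+2)) ≤
      2 * u (n-(k+1)) 1 - u (n-1) 1 - u (n-(k+1)) (k+2) := by
  induction k with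
  | zero => simp; linarith
  | succ k ih =>
    rw [sum_range_succ]
    have ih := ih (by omega) (by omega)
    obtain ⟨m, rfl⟩ := Nat.exists_eq_add_of_le' hk
    simp only [show m + (k + 1 + 1) - (k+1) = m + 1 by omega,
      show m + (k + 1 + 1) - (k+1+1) = m by omega] at ih ⊢
    have s1 := h.step m (k+2) (by omega)
    have s2 := h.step_one m
    have h1 := h.le_one m (k+2) (by omega)
    have h3 := h.nonneg m (k+2) (by omega)
    have hpos : 0 ≤ (if k + 2 ≤ m + 1 then u (m + 1 - (k + 2)) (k + 2) else 0) := by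
      split_ifs
      · exact h.nonneg _ _ (by omega)
      · exact le_rfl
    have : 0 ≤ 2 * ((m:ℝ)+1) * (2 * u m 1 - u m (k+2) + u (m+1) (k+2) - 2 * u (m+1) 1) := by
      nlinarith
    have := nonneg_of_mul_nonneg_right this (by positivity)
    have e : k + 1 + 1 = k + 2 := rfl
    rw [e]
    linarith

lemma W_le (h : URec u) (n : ℕ) (hn : 1 ≤ n) :
    ∑ l ∈ range n, (u (n-(l+1)) (l+1) - u (n-(l+1)) (l+2)) ≤ 2 * u n 1 := by
  rcases Nat.lt_or_ge n 2 with h2 | h2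
  · have : n = 1 := by omega
    subst this
    simp [h.zero]; exact (h.pos_one 1).le
  · obtain ⟨k, hk⟩ : ∃ k, n / 2 = k + 1 := ⟨n/2 - 1, by omega⟩
    have hb := h.Wbound n k (by omega) (by omega)
    have e : ∑ l ∈ range n, (u (n-(l+1)) (l+1) - u (n-(l+1)) (l+2)) =
        ∑ l ∈ range (k+1), (u (n-(l+1)) (l+1) - u (n-(l+1)) (l+2)) := by
      symm
      apply sum_subset
      · intro j; simp only [mem_range]; omega
      · intro j hj hj'
        simp only [mem_range] at hj hj'
        by_cases hjn : j + 1 = n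
        · rw [hjn]; simp [h.zero]
        · rw [h.eq_zero _ _ (by omega) (by omega), h.eq_zero _ _ (by omega) (by omega)]; simp
    rw [e]
    have h3 := h.half (n-(k+1)) n (by omega) (by omega)
    have h4 : u n 1 ≤ u (n-1) 1 := h.anti_one (by omega)
    have h5 := h.nonneg (n-(k+1)) (k+2) (by omega)
    linarith

lemma abel (f : ℕ → ℝ) (n : ℕ) :
    ∑ l ∈ range n, ((l:ℝ)+1) * (f (l+1) - f (l+2)) = ∑ l ∈ range n, f (l+1) - n * f (n+1) := by
  induction n with
  | zero => simp
  | succ n ih => rw [sum_range_succ, sum_range_succ, ih]; push_cast; ring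

theorem g_mono (h : URec u) (n : ℕ) (hn : 1 ≤ n) :
    ∑ l ∈ range n, u n (l+1) ≤ ∑ l ∈ range (n+1), u (n+1) (l+1) := by
  have hW := h.W_le n hn
  have h1 : 4 * ∑ l ∈ range n, u n (l+1) ≤
      ∑ l ∈ range n, (u (n-(l+1)) (l+1) + u (n-(l+1)) (l+2)) := by
    have := abel (fun l => u n l) n
    simp only [h.eq_zero n (n+1) hn (by omega)] at this
    rw [mul_zero, sub_zero] at this
    rw [← this, mul_sum]
    apply sum_le_sum
    intro l hl
    have := h.trapezoid n (l+1) (by omega) (by have := mem_range.1 hl; omega)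
    push_cast at this
    linarith
  have h2 : 2 * ((n:ℝ)+1) * ∑ l ∈ range (n+1), u (n+1) (l+1) =
      2 * n * ∑ l ∈ range n, u n (l+1) + ∑ l ∈ range (n+1), u (n - l) (l+1) := by
    rw [mul_sum]
    have : ∑ l ∈ range n, u n (l+1) = ∑ l ∈ range (n+1), u n (l+1) := by
      rw [sum_range_succ, h.eq_zero n (n+1) hn (by omega), add_zero]
    rw [this, mul_sum, ← sum_add_distrib]
    apply sum_congr rfl
    intro l hl
    have hl := mem_range.1 hl
    rw [h.step n (l+1) (by omega), if_pos (by omega), show n + 1 - (l+1) = n - l by omega]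
  rw [sum_range_succ' (fun l => u (n-l) (l+1))] at h2
  simp only [sum_add_distrib, sum_sub_distrib] at h1 hW
  simp only [Nat.sub_zero, zero_add] at h2
  have h3 : ∑ k ∈ range n, u (n - (k + 1)) (k + 1 + 1) = ∑ k ∈ range n, u (n - (k + 1)) (k + 2) := rfl
  rw [h3] at h2
  have : 0 ≤ 2 * ((n:ℝ)+1) * (∑ l ∈ range (n+1), u (n+1) (l+1) - ∑ l ∈ range n, u n (l+1)) := by
    rw [mul_sub, h2]; linarith
  have := nonneg_of_mul_nonneg_right this (by positivity)
  linarith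

end URec

section comb
open Equiv

/-- `f` is a labelling of the orbits of the group generated by `c` and `i` -/
structure IsPart {α Q : Type*} (c i : Perm α) (f : α → Q) : Prop where
  surj : Function.Surjective f
  hc : ∀ a, f (c a) = f a
  hi : ∀ a, f (i a) = f a
  conn : ∀ s : Set α, (∀ a ∈ s, c a ∈ s ∧ i a ∈ s) → ∀ a b, f a = f b → a ∈ s → b ∈ s

lemma IsPart.le {α Q R : Type*} {c i : Perm α} {f : α → Q} {g : α → R}
    (hf : IsPart c i f) (hg : IsPart c i g) (a b : α) (h : f a = f b) : g a = g b := by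
  have := hf.conn {x | g a = g x} (fun x hx => ⟨by
    simp only [Set.mem_ofPred_eq] at hx ⊢; rw [hg.hc, hx], by
    simp only [Set.mem_ofPred_eq] at hx ⊢; rw [hg.hi, hx]⟩) a b h rfl
  exact this

lemma IsPart.prod_eq {α Q R M : Type*} [Fintype Q] [Fintype R] [CommMonoid M]
    {c i : Perm α} {f : α → Q} {g : α → R}
    (hf : IsPart c i f) (hg : IsPart c i g) (w : ℕ → M) :
    ∏ q, w (f ⁻¹' {q}).ncard = ∏ r, w (g ⁻¹' {r}).ncard := by
  have h1 : ∀ q, f (Function.surjInv hf.surj q) = q := Function.surjInv_eq hf.surj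
  refine Fintype.prod_bijective (fun q => g (Function.surjInv hf.surj q)) ⟨?_, ?_⟩ _ _ ?_
  · intro q q' h
    have := hg.le hf _ _ h
    rwa [h1, h1] at this
  · intro r
    obtain ⟨a, rfl⟩ := hg.surj r
    exact ⟨f a, hf.le hg _ _ (h1 _)⟩
  · intro q
    congr 2
    ext a
    simp only [Set.mem_preimage, Set.mem_singleton_iff]
    constructor
    · rintro rfl; exact hf.le hg _ _ (h1 _).symm
    · intro h
      have := hg.le hf _ _ h
      rwa [h1] at this

lemma isPart_orbit {α : Type*} [Finite α] (c i : Perm α) :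
    IsPart c i (fun a => (Quotient.mk'' a :
      MulAction.orbitRel.Quotient (Subgroup.closure {c, i}) α)) where
  surj := Quotient.mk''_surjective
  hc a := by
    apply Quotient.sound'
    exact ⟨⟨c, Subgroup.subset_closure (by simp)⟩, rfl⟩
  hi a := by
    apply Quotient.sound'
    exact ⟨⟨i, Subgroup.subset_closure (by simp)⟩, rfl⟩
  conn s hs a b hab ha := by
    have key : ∀ g ∈ Subgroup.closure {c, i}, ∀ x, x ∈ s → g x ∈ s := by
      intro g hg
      induction hg using Subgroup.closure_induction with
      | mem g hg =>
        rcases hg with rfl | rfl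
        · exact fun x hx => (hs x hx).1
        · exact fun x hx => (hs x hx).2
      | one => exact fun x hx => hx
      | mul g h _ _ hg hh => exact fun x hx => hg _ (hh _ hx)
      | inv g _ hg =>
        intro x hx
        have himg : g '' s = s := Set.eq_of_subset_of_ncard_le
          (by rintro _ ⟨y, hy, rfl⟩; exact hg y hy)
          (by rw [Set.ncard_image_of_injective _ g.injective]) (Set.toFinite s)
        rw [← himg] at hx
        obtain ⟨y, hy, rfl⟩ := hx
        simpa using hy
    obtain ⟨g, hg⟩ := Quotient.exact' hab.symm
    have := key g.1 g.2 a ha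
    have e : g.1 a = b := hg
    rwa [e] at this

/-- the cycle-type monomial -/
noncomputable def mono {α : Type*} [Finite α] (c i : Perm α) : MvPolynomial ℕ ℝ :=
  ∏ᶠ q : MulAction.orbitRel.Quotient (Subgroup.closure {c, i}) α, MvPolynomial.X (q.orbit.ncard)

lemma mono_eq {α Q : Type*} [Finite α] [Fintype Q] {c i : Perm α} {f : α → Q}
    (hf : IsPart c i f) : mono c i = ∏ q, MvPolynomial.X (f ⁻¹' {q}).ncard := by
  classical
  have : Fintype (MulAction.orbitRel.Quotient (Subgroup.closure {c, i}) α) := Fintype.ofFinite _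
  rw [mono, finprod_eq_prod_of_fintype, hf.prod_eq (isPart_orbit c i)]
  apply prod_congr rfl
  intro q _
  congr 2
  ext a
  simp [MulAction.orbitRel.Quotient.mem_orbit]

lemma IsPart.transport {α β Q : Type*} {c i : Perm α} {f : α → Q} (hf : IsPart c i f)
    (e : α ≃ β) : IsPart (e.permCongr c) (e.permCongr i) (f ∘ e.symm) where
  surj := hf.surj.comp e.symm.surjective
  hc a := by simp [hf.hc]
  hi a := by simp [hf.hi]
  conn s hs a b hab ha := by
    have := hf.conn (e ⁻¹' s) (fun x hx => by
      have := hs (e x) hx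
      simpa using this) (e.symm a) (e.symm b) hab (by simpa using ha)
    simpa using this

lemma mono_transport {α β : Type*} [Finite α] [Finite β] (c i : Perm α) (e : α ≃ β) :
    mono (e.permCongr c) (e.permCongr i) = mono c i := by
  classical
  have : Fintype (MulAction.orbitRel.Quotient (Subgroup.closure {c, i}) α) := Fintype.ofFinite _
  have h := isPart_orbit c i
  rw [mono_eq (h.transport e), mono_eq h]
  apply prod_congr rfl
  intro q _
  congr 1
  rw [Set.preimage_comp, ← Equiv.image_eq_preimage_symm, Set.ncard_image_of_injective _ e.injective]

abbrev bar {α : Type*} (c : Perm α) : Perm (α ⊕ Fin 2) := Equiv.sumCongr c (swap 0 1)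

abbrev insP {α : Type*} [DecidableEq α] (c : Perm α) (x : α) : Perm (α ⊕ Fin 2) :=
  swap (Sum.inl (c x)) (Sum.inr 0) * bar c * swap (Sum.inl (c x)) (Sum.inr 0)

lemma isPart_bar {α Q : Type*} {c i : Perm α} {f : α → Q} (hf : IsPart c i f) :
    IsPart (bar c) (bar i) (Sum.elim (fun a => some (f a)) (fun _ => none) : α ⊕ Fin 2 → Option Q) where
  surj := by
    rintro (_ | q)
    · exact ⟨Sum.inr 0, rfl⟩
    · obtain ⟨a, rfl⟩ := hf.surj q
      exact ⟨Sum.inl a, rfl⟩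
  hc := by rintro (a | a) <;> simp [hf.hc]
  hi := by rintro (a | a) <;> simp [hf.hi]
  conn s hs := by
    rintro (a | a) (b | b) hab ha
    · simp only [Sum.elim_inl, Option.some.injEq] at hab
      exact hf.conn (Sum.inl ⁻¹' s) (fun x hx => hs _ hx) a b hab ha
    · simp at hab
    · simp at hab
    · have := (hs _ ha).1
      fin_cases a <;> fin_cases b <;> simp_all

lemma insP_val {α : Type*} [DecidableEq α] (c : Perm α) (hc : ∀ a, c a ≠ a) (hcc : ∀ a, c (c a) = a)
    (x : α) : insP c x (Sum.inl x) = Sum.inr 0 ∧ insP c x (Sum.inr 0) = Sum.inl x ∧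
      insP c x (Sum.inl (c x)) = Sum.inr 1 ∧ insP c x (Sum.inr 1) = Sum.inl (c x) ∧
      ∀ a, a ≠ x → a ≠ c x → insP c x (Sum.inl a) = Sum.inl (c a) := by
  have h1 := (hc x).symm
  refine ⟨?_, ?_, ?_, ?_, ?_⟩
  · simp [insP, swap_apply_def, h1]
  · simp [insP, swap_apply_def, h1, hcc]
  · simp [insP, swap_apply_def]
  · simp [insP, swap_apply_def]
  · intro a ha ha'
    simp [insP, swap_apply_def, ha, ha']

lemma isPart_ins {α Q : Type*} [DecidableEq α] {c i : Perm α} {f : α → Q} (hf : IsPart c i f)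
    (hc : ∀ a, c a ≠ a) (hcc : ∀ a, c (c a) = a) (x : α) :
    IsPart (insP c x) (bar i) (Sum.elim f (fun _ => f x) : α ⊕ Fin 2 → Q) := by
  obtain ⟨v1, v2, v3, v4, v5⟩ := insP_val c hc hcc x
  refine ⟨?_, ?_, ?_, ?_⟩
  · intro q
    obtain ⟨a, rfl⟩ := hf.surj q
    exact ⟨Sum.inl a, rfl⟩
  · rintro (a | a)
    · by_cases h1 : a = x
      · rw [h1, v1]; rfl
      by_cases h2 : a = c x
      · rw [h2, v3]; simp [hf.hc]
      rw [v5 a h1 h2]; simp [hf.hc]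
    · fin_cases a
      · change Sum.elim _ _ (insP c x (Sum.inr 0)) = _
        rw [v2]; rfl
      · change Sum.elim _ _ (insP c x (Sum.inr 1)) = _
        rw [v4]; simp [hf.hc]
  · rintro (a | a)
    · simp [hf.hi]
    · simp
  · intro s hs
    have b0 : ∀ j k : Fin 2, Sum.inr j ∈ s → Sum.inr k ∈ s := by
      intro j k hj
      have := (hs _ hj).2
      fin_cases j <;> fin_cases k <;> simp_all
    have hx0 : Sum.inl x ∈ s ↔ Sum.inr 0 ∈ s := by
      constructor
      · intro h; have := (hs _ h).1; rwa [v1] at this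
      · intro h; have := (hs _ h).1; rwa [v2] at this
    have hx1 : Sum.inl (c x) ∈ s ↔ Sum.inr 1 ∈ s := by
      constructor
      · intro h; have := (hs _ h).1; rwa [v3] at this
      · intro h; have := (hs _ h).1; rwa [v4] at this
    have hinl : ∀ a b, f a = f b → Sum.inl a ∈ s → Sum.inl b ∈ s := by
      refine hf.conn (Sum.inl ⁻¹' s) ?_
      intro a ha
      refine ⟨?_, (hs _ ha).2⟩
      simp only [Set.mem_preimage] at ha ⊢
      by_cases h1 : a = x
      · rw [h1] at ha ⊢; exact hx1.2 (b0 0 1 (hx0.1 ha))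
      by_cases h2 : a = c x
      · rw [h2] at ha ⊢; rw [hcc]; exact hx0.2 (b0 1 0 (hx1.1 ha))
      have := (hs _ ha).1
      rwa [v5 a h1 h2] at this
    rintro (a | a) (b | b) hab ha
    · exact hinl a b hab ha
    · exact b0 0 b (hx0.1 (hinl a x hab ha))
    · exact hinl x b hab (hx0.2 (b0 a 0 ha))
    · exact b0 a b ha

lemma mono_bar {α : Type*} [Finite α] (c i : Perm α) :
    mono (bar c) (bar i) = MvPolynomial.X 2 * mono c i := by
  classical
  have : Fintype (MulAction.orbitRel.Quotient (Subgroup.closure {c, i}) α) := Fintype.ofFinite _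
  have h := isPart_orbit c i
  rw [mono_eq (isPart_bar h), mono_eq h, Fintype.prod_option]
  congr 1
  · congr 1
    have : (Sum.elim (fun a => some (Quotient.mk'' a)) (fun _ => none) : α ⊕ Fin 2 →
      Option (MulAction.orbitRel.Quotient (Subgroup.closure {c, i}) α)) ⁻¹' {none} =
        Sum.inr '' Set.univ := by
      ext (a | a) <;> simp
    rw [this, Set.ncard_image_of_injective _ Sum.inr_injective, Set.ncard_univ]; simp
  · apply prod_congr rfl
    intro q _
    congr 1
    have : (Sum.elim (fun a => some (Quotient.mk'' a)) (fun _ => none) : α ⊕ Fin 2 →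
      Option (MulAction.orbitRel.Quotient (Subgroup.closure {c, i}) α)) ⁻¹' {some q} =
        Sum.inl '' ((fun a => Quotient.mk'' a) ⁻¹' {q}) := by
      ext (a | a) <;> simp
    rw [this, Set.ncard_image_of_injective _ Sum.inl_injective]

lemma fib_ncard {α Q : Type*} [Finite α] [DecidableEq Q] (f : α → Q) (y q : Q) :
    ((Sum.elim f (fun _ => y) : α ⊕ Fin 2 → Q) ⁻¹' {q}).ncard =
      (f ⁻¹' {q}).ncard + if q = y then 2 else 0 := by
  have : (Sum.elim f (fun _ => y) : α ⊕ Fin 2 → Q) ⁻¹' {q} =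
      Sum.inl '' (f ⁻¹' {q}) ∪ Sum.inr '' {_j : Fin 2 | q = y} := by
    ext (a | a) <;> simp [eq_comm]
  rw [this, Set.ncard_union_eq, Set.ncard_image_of_injective _ Sum.inl_injective,
    Set.ncard_image_of_injective _ Sum.inr_injective]
  · congr 1
    split_ifs with h <;> simp [h, Set.ncard_univ]
  · rw [Set.disjoint_left]; rintro _ ⟨a, _, rfl⟩; simp

end comb

section comb2
open Equiv

lemma sum_mono_ins {α : Type*} [Fintype α] [DecidableEq α] (c i : Perm α)
    (hc : ∀ a, c a ≠ a) (hcc : ∀ a, c (c a) = a) :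
    ∑ x, mono (insP c x) (bar i) = zD (mono c i) := by
  classical
  have : Fintype (MulAction.orbitRel.Quotient (Subgroup.closure {c, i}) α) := Fintype.ofFinite _
  obtain ⟨f, h⟩ : ∃ f : α → MulAction.orbitRel.Quotient (Subgroup.closure {c, i}) α,
    IsPart c i f := ⟨_, isPart_orbit c i⟩
  rw [mono_eq h, zD_prod]
  have e : ∀ x, mono (insP c x) (bar i) = _ := fun x => mono_eq (isPart_ins h hc hcc x)
  simp only [e, fib_ncard]
  rw [← sum_fiberwise (s := univ) (g := f)]
  apply sum_congr rfl
  intro q _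
  have : ∀ x ∈ univ.filter (fun x => f x = q),
      ∏ r, (MvPolynomial.X ((f ⁻¹' {r}).ncard + if r = f x then 2 else 0) : MvPolynomial ℕ ℝ) =
      ∏ r, MvPolynomial.X ((f ⁻¹' {r}).ncard + if r = q then 2 else 0) := by
    intro x hx
    rw [(mem_filter.1 hx).2]
  rw [sum_congr rfl this, sum_const, nsmul_eq_mul]
  congr 2
  rw [← Set.ncard_coe_finset]
  congr 1
  ext x; simp

/-- fixed point free involutions -/
def Fpf (α : Type*) : Type _ := {μ : Perm α // (∀ x, μ x ≠ x) ∧ μ * μ = 1}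

lemma Fpf.inv {α : Type*} (c : Fpf α) (a : α) : c.1 (c.1 a) = a := by
  have := congrArg (fun g : Perm α => g a) c.2.2
  simpa using this

lemma bar_fpf {α : Type*} (c : Perm α) (h : (∀ x, c x ≠ x) ∧ c * c = 1) :
    (∀ x, bar c x ≠ x) ∧ bar c * bar c = 1 := by
  have h2 : ∀ a, c (c a) = a := fun a => by
    have := congrArg (fun g : Perm α => g a) h.2
    simpa using this
  constructor
  · rintro (a | a)
    · simp [h.1]
    · fin_cases a <;> simp
  · ext (a | a) <;> simp [h2]

lemma conj_fpf {α : Type*} (c s : Perm α) (hs : s * s = 1) (h : (∀ x, c x ≠ x) ∧ c * c = 1) :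
    (∀ x, (s * c * s) x ≠ x) ∧ (s * c * s) * (s * c * s) = 1 := by
  constructor
  · intro x hx
    apply h.1 (s x)
    have := congrArg s hx
    simp only [Perm.mul_apply] at this
    have e : ∀ y, s (s y) = y := fun y => by
      have := congrArg (fun g : Perm α => g y) hs
      simpa using this
    rwa [e] at this
  · calc s * c * s * (s * c * s) = s * c * (s * s) * c * s := by group
      _ = s * (c * c) * s := by rw [hs]; group
      _ = 1 := by rw [h.2]; simpa using hs

def insF {α : Type*} [DecidableEq α] : Fpf α × Option α → Fpf (α ⊕ Fin 2)
  | (c, none) => ⟨bar c.1, bar_fpf c.1 c.2⟩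
  | (c, some x) => ⟨insP c.1 x, conj_fpf _ _ (swap_mul_self _ _) (bar_fpf c.1 c.2)⟩

lemma bar_inj {α : Type*} {c d : Perm α} (h : bar c = bar d) : c = d := by
  ext a
  have := congrArg (fun g : Perm (α ⊕ Fin 2) => g (Sum.inl a)) h
  simpa using this

lemma insF_bij {α : Type*} [Finite α] [DecidableEq α] : Function.Bijective (insF (α := α)) := by
  constructor
  · rintro ⟨c, x⟩ ⟨d, y⟩ h
    have h := congrArg Subtype.val h
    have key : ∀ (c : Fpf α) (d : Fpf α) y, bar c.1 ≠ insP d.1 y := by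
      intro c d y h
      have := congrArg (fun g : Perm (α ⊕ Fin 2) => g (Sum.inr 0)) h
      simp only [(insP_val d.1 d.2.1 d.inv y).2.1] at this
      simp at this
    rcases x with _ | x <;> rcases y with _ | y
    · have := bar_inj h
      rw [Subtype.ext this]
    · exact absurd h (key _ _ _)
    · exact absurd h.symm (key _ _ _)
    · change insP c.1 x = insP d.1 y at h
      have e1 := congrArg (fun g : Perm (α ⊕ Fin 2) => g (Sum.inr 0)) h
      have e2 := congrArg (fun g : Perm (α ⊕ Fin 2) => g (Sum.inr 1)) h
      simp only [(insP_val d.1 d.2.1 d.inv y).2.1, (insP_val c.1 c.2.1 c.inv x).2.1,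
        (insP_val d.1 d.2.1 d.inv y).2.2.2.1, (insP_val c.1 c.2.1 c.inv x).2.2.2.1] at e1 e2
      have e1 := Sum.inl_injective e1
      rw [insP, insP, e2] at h
      have := bar_inj (mul_left_cancel (mul_right_cancel h))
      rw [e1, Subtype.ext this]
  · have hb : ∀ g : Fpf (α ⊕ Fin 2), g.1 (Sum.inr 1) = Sum.inr 0 → ∃ c : Fpf α, g.1 = bar c.1 := by
      intro g hg
      have hg' : g.1 (Sum.inr 0) = Sum.inr 1 := by rw [← hg, g.inv]
      have hm : Set.MapsTo g.1 (Set.range Sum.inr) (Set.range Sum.inr) := by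
        rintro _ ⟨j, rfl⟩
        fin_cases j
        · exact ⟨1, hg'.symm⟩
        · exact ⟨0, hg.symm⟩
      obtain ⟨⟨c, d⟩, hcd⟩ := Equiv.Perm.mem_sumCongrHom_range_of_perm_mapsTo_inl
        ((Equiv.Perm.perm_mapsTo_inl_iff_mapsTo_inr g.1).2 hm)
      have hv : ∀ a, g.1 (Sum.inl a) = Sum.inl (c a) := fun a => by rw [← hcd]; rfl
      refine ⟨⟨c, ?_, ?_⟩, ?_⟩
      · intro x hx
        apply g.2.1 (Sum.inl x)
        rw [hv, hx]
      · ext x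
        have := g.inv (Sum.inl x)
        rw [hv, hv] at this
        exact Sum.inl_injective this
      · ext (a | a)
        · rw [hv]; rfl
        · fin_cases a
          · exact hg'
          · exact hg
    intro g
    rcases hg : g.1 (Sum.inr 1) with y | j
    · let s : Perm (α ⊕ Fin 2) := swap (Sum.inl y) (Sum.inr 0)
      have hs : s * s = 1 := swap_mul_self _ _
      obtain ⟨c, hc⟩ := hb ⟨s * g.1 * s, conj_fpf _ _ hs g.2⟩ (by
        simp [s, swap_apply_def, hg])
      refine ⟨(c, some (c.1 y)), Subtype.ext ?_⟩
      change swap (Sum.inl (c.1 (c.1 y))) (Sum.inr 0) * bar c.1 *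
        swap (Sum.inl (c.1 (c.1 y))) (Sum.inr 0) = g.1
      rw [c.inv]
      change s * bar c.1 * s = g.1
      rw [← hc]
      calc s * (s * g.1 * s) * s = (s * s) * g.1 * (s * s) := by group
        _ = g.1 := by rw [hs]; group
    · have : j = 0 := by
        fin_cases j
        · rfl
        · exact absurd hg (g.2.1 _)
      subst this
      obtain ⟨c, hc⟩ := hb g hg
      exact ⟨(c, none), Subtype.ext hc.symm⟩

lemma intervalPerm_succ (n : ℕ) :
    intervalPerm (n+1) = (finSumFinEquiv (m := 2 * n) (n := 2)).permCongr (bar (intervalPerm n)) := by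
  have : ∀ z : Fin (2 * n) ⊕ Fin 2, intervalPerm (n+1) (finSumFinEquiv (m := 2 * n) (n := 2) z) =
      finSumFinEquiv (m := 2 * n) (n := 2) (bar (intervalPerm n) z) := by
    rintro (a | a)
    · apply Fin.ext
      simp [intervalPerm, Function.Involutive.toPerm]
    · apply Fin.ext
      fin_cases a <;> simp [intervalPerm, Function.Involutive.toPerm]
  apply Equiv.ext
  intro x
  rw [Equiv.permCongr_apply, ← this]
  erw [Equiv.apply_symm_apply]

noncomputable def cmono {n : ℕ} (c : Cyclation n) : MvPolynomial ℕ ℝ := mono c.1 (intervalPerm n)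

lemma sum_cmono_succ (n : ℕ) : ∑ c : Cyclation (n+1), cmono c =
    MvPolynomial.X 2 * (∑ c : Cyclation n, cmono c) + zD (∑ c : Cyclation n, cmono c) := by
  classical
  let e := finSumFinEquiv (m := 2 * n) (n := 2)
  let φ : Cyclation n × Option (Fin (2*n)) → Cyclation (n+1) := fun p =>
    ⟨e.permCongr (insF (α := Fin (2*n)) p).1, by
      have h := (insF (α := Fin (2*n)) p).2
      constructor
      · intro x hx
        apply h.1 (e.symm x)
        rw [Equiv.permCongr_apply] at hx
        rw [Equiv.eq_symm_apply]; exact hx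
      · have := congrArg e.permCongr h.2
        apply Equiv.ext
        intro x
        have h2 := congrArg (fun g => g (e.symm x)) h.2
        simp only [Perm.mul_apply, Perm.one_apply] at h2
        rw [Perm.mul_apply, Equiv.permCongr_apply, Equiv.permCongr_apply, Equiv.symm_apply_apply,
          h2, Equiv.apply_symm_apply]; rfl⟩
  have hφ : Function.Bijective φ := by
    constructor
    · intro p q h
      have h := congrArg Subtype.val h
      exact insF_bij.1 (Subtype.ext (e.permCongr.injective h))
    · intro g
      have : ∃ f : Fpf (Fin (2*n) ⊕ Fin 2), e.permCongr f.1 = g.1 := by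
        refine ⟨⟨e.symm.permCongr g.1, ?_, ?_⟩, ?_⟩
        · intro x hx
          apply g.2.1 (e x)
          rw [Equiv.permCongr_apply] at hx
          rw [Equiv.symm_apply_eq] at hx; exact hx
        · apply Equiv.ext
          intro x
          have h2 := congrArg (fun g => g (e x)) g.2.2
          simp only [Perm.mul_apply, Perm.one_apply] at h2
          rw [Perm.mul_apply, Equiv.permCongr_apply, Equiv.permCongr_apply, Equiv.symm_symm,
            Equiv.apply_symm_apply]
          erw [h2]
          simp
        · apply Equiv.ext
          intro x
          simp [Equiv.permCongr_apply]
      obtain ⟨f, hf⟩ := this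
      obtain ⟨p, hp⟩ := insF_bij.2 f
      refine ⟨p, Subtype.ext ?_⟩
      change e.permCongr (insF (α := Fin (2*n)) p).1 = _
      rw [hp, hf]
  have h1 : ∀ p, cmono (φ p) = mono (insF (α := Fin (2*n)) p).1 (bar (intervalPerm n)) := by
    intro p
    rw [cmono, intervalPerm_succ]
    exact mono_transport _ _ e
  rw [← Fintype.sum_bijective φ hφ _ _ (fun _ => rfl)]
  rw [Fintype.sum_prod_type, mul_sum, map_sum, ← sum_add_distrib]
  apply sum_congr rfl
  intro c _
  rw [Fintype.sum_option, h1]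
  congr 1
  · exact mono_bar _ _
  · simp only [h1]
    exact sum_mono_ins c.1 (intervalPerm n) c.2.1 (Fpf.inv (α := Fin (2*n)) c)

instance : Unique (Cyclation 0) where
  default := ⟨1, fun x => x.elim0, by simp⟩
  uniq c := Subtype.ext (Equiv.ext fun x => x.elim0)

lemma sum_cmono (n : ℕ) : ∑ c : Cyclation n, cmono c =
    MvPolynomial.C (2 ^ n * (n.factorial : ℝ)) * zp n := by
  induction n with
  | zero =>
    rw [Fintype.sum_unique, cmono]
    have : IsPart (default : Cyclation 0).1 (intervalPerm 0) (fun x => x.elim0 : Fin (2*0) → Empty) :=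
      ⟨fun x => x.elim, fun x => x.elim0, fun x => x.elim0, fun s _ x => x.elim0⟩
    rw [mono_eq this]
    simp [zp]
  | succ n ih =>
    rw [sum_cmono_succ, ih, ← MvPolynomial.smul_eq_C_mul, Derivation.map_smul, MvPolynomial.smul_eq_C_mul,
      MvPolynomial.smul_eq_C_mul, mul_left_comm, ← mul_add, ← zp_succ, ← mul_assoc]
    congr 1
    have : (2 * ((n : MvPolynomial ℕ ℝ)+1)) = MvPolynomial.C (2 * ((n:ℝ)+1)) := by
      rw [map_mul, map_add, map_natCast, map_one, map_ofNat]
    rw [this, ← map_mul, Nat.factorial_succ]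
    congr 1
    push_cast; ring

lemma eval_cmono (n : ℕ) (c : Cyclation n) (l : ℕ) (hn : 1 ≤ n) :
    MvPolynomial.eval (fun k => if l ≤ k / 2 then (1:ℝ) else 0) (cmono c) =
      if l ≤ shortestCycle c then 1 else 0 := by
  classical
  have : Fintype (MulAction.orbitRel.Quotient (Subgroup.closure {c.1, intervalPerm n}) (Fin (2*n))) :=
    Fintype.ofFinite _
  rw [cmono, mono, finprod_eq_prod_of_fintype, map_prod]
  simp only [MvPolynomial.eval_X]
  rw [prod_ite_zero]
  simp only [prod_const_one]
  apply if_congr _ rfl rfl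
  have hne : (Set.range fun x : Fin (2 * n) => (MulAction.orbit (cycGroup c) x).ncard / 2).Nonempty :=
    ⟨_, ⟨⟨0, by omega⟩, rfl⟩⟩
  rw [shortestCycle, le_csInf_iff (OrderBot.bddBelow _) hne]
  constructor
  · rintro h _ ⟨x, rfl⟩
    exact h (Quotient.mk'' x) (mem_univ _)
  · intro h q _
    induction q using Quotient.inductionOn' with
    | h x => exact h _ ⟨x, rfl⟩

lemma count (n l : ℕ) (hn : 1 ≤ n) :
    ∑ c : Cyclation n, (if l ≤ shortestCycle c then (1:ℝ) else 0) = 2 ^ n * n.factorial * uu n l := by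
  have := congrArg (MvPolynomial.eval (fun k => if l ≤ k / 2 then (1:ℝ) else 0)) (sum_cmono n)
  rw [map_sum, map_mul, MvPolynomial.eval_C] at this
  rw [uu, ← this]
  exact sum_congr rfl fun c _ => (eval_cmono n c l hn).symm

lemma shortest_le (n : ℕ) (hn : 1 ≤ n) (c : Cyclation n) : shortestCycle c ≤ n := by
  have h0 : shortestCycle c ≤ (MulAction.orbit (cycGroup c) (⟨0, by omega⟩ : Fin (2*n))).ncard / 2 :=
    Nat.sInf_le ⟨⟨0, by omega⟩, rfl⟩
  have := Set.ncard_le_card (MulAction.orbit (cycGroup c) (⟨0, by omega⟩ : Fin (2*n)))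
  simp only [Nat.card_eq_fintype_card, Fintype.card_fin] at this
  omega

lemma urec : URec uu := ⟨fun l => by simp [uu, zp], uu_rec⟩

lemma ExT_eq (n : ℕ) (hn : 1 ≤ n) : ExT n = (∑ l ∈ range n, uu n (l+1)) / uu n 1 := by
  have h1 : (Fintype.card (Cyclation n) : ℝ) = 2 ^ n * n.factorial * uu n 1 := by
    rw [← uu_zero', ← count n 0 hn]; simp
  have h2 : ∑ c : Cyclation n, (shortestCycle c : ℝ) =
      2 ^ n * n.factorial * ∑ l ∈ range n, uu n (l+1) := by
    rw [mul_sum]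
    simp only [← count n _ hn]
    rw [sum_comm]
    apply sum_congr rfl
    intro c _
    rw [← sum_filter]
    have : (range n).filter (fun l => l + 1 ≤ shortestCycle c) = range (shortestCycle c) := by
      ext l
      have := shortest_le n hn c
      simp only [mem_filter, mem_range]; omega
    rw [this]; simp
  rw [ExT, h1, h2, mul_div_mul_left _ _ (by positivity)]

end comb2

end

/-- For every `n ≥ 1`, `(2n+2)·Ex[T_n] ≤ (2n+1)·Ex[T_{n+1}]`; equivalently the sequence
`(1/4^n)·binom(2n,n)·Ex[T_n]` is nondecreasing in `n`. -/
theorem expected_shortest_cycle_monotone (n : ℕ) (hn : 1 ≤ n) :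
    (2 * (n : ℝ) + 2) * ExT n ≤ (2 * (n : ℝ) + 1) * ExT (n + 1) ∧
    (1 / 4 ^ n : ℝ) * Nat.choose (2 * n) n * ExT n
      ≤ (1 / 4 ^ (n + 1) : ℝ) * Nat.choose (2 * (n + 1)) (n + 1) * ExT (n + 1) := by
  have h1 := ExT_eq n hn
  have h2 := ExT_eq (n+1) (by omega)
  have hg := urec.g_mono n hn
  have hs := urec.step_one n
  have p1 := urec.pos_one n
  have p2 := urec.pos_one (n+1)
  have main : (2 * (n : ℝ) + 2) * ExT n ≤ (2 * (n : ℝ) + 1) * ExT (n + 1) := by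
    rw [h1, h2, mul_div_assoc', mul_div_assoc', div_le_div_iff₀ p1 p2]
    have e1 : (2 * (n:ℝ) + 2) * (∑ l ∈ Finset.range n, uu n (l+1)) * uu (n+1) 1 =
        (2 * (n:ℝ) + 1) * uu n 1 * ∑ l ∈ Finset.range n, uu n (l+1) := by
      rw [← hs]; ring
    have e2 : 0 ≤ (2 * (n:ℝ) + 1) * uu n 1 := by positivity
    rw [e1]
    nlinarith [mul_le_mul_of_nonneg_left hg e2]
  refine ⟨main, ?_⟩
  have hcb := Nat.succ_mul_centralBinom_succ n
  simp only [Nat.centralBinom] at hcb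
  have hcb' : ((n:ℝ) + 1) * Nat.choose (2 * (n+1)) (n+1) =
      2 * (2 * n + 1) * Nat.choose (2 * n) n := by exact_mod_cast hcb
  set A : ℝ := ((Nat.choose (2 * n) n : ℕ) : ℝ) with hA
  have hA0 : 0 ≤ A := by positivity
  have hB : (Nat.choose (2 * (n+1)) (n+1) : ℝ) = 2 * (2 * n + 1) * A / (n + 1) := by
    rw [eq_div_iff (by positivity), ← hcb']; ring
  rw [hB]
  have e3 : (1 / 4 ^ (n + 1) : ℝ) * (2 * (2 * n + 1) * A / (n + 1)) * ExT (n + 1) =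
      (1 / 4 ^ n * A / (2 * n + 2)) * ((2 * n + 1) * ExT (n+1)) := by
    rw [pow_succ]; field_simp; ring
  have e4 : (1 / 4 ^ n : ℝ) * A * ExT n = (1 / 4 ^ n * A / (2 * n + 2)) * ((2 * n + 2) * ExT n) := by
    field_simp
  rw [e3, e4]
  exact mul_le_mul_of_nonneg_left main (by positivity)
end
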